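/- For every P_9-free bipartite graph G and every enumeration π of its vertices, Algorithm 1 uses at most 6(χ*(G) + 1)^2 colors on the on-line graph (G, π), where χ*(G) is the on-line chromatic number of G. -/

import Mathlib

/-! ### P_n-free graphs -/

/-- `f` lists the vertices of an induced path on `n` vertices in `G`. -/
def IsInducedPath {V : Type*} (G : SimpleGraph V) (n : ℕ) (f : Fin n → V) : Prop :=
  Function.Injective f ∧
    ∀ a b : Fin n, G.Adj (f a) (f b) ↔ (a.val + 1 = b.val ∨ b.val + 1 = a.val)

/-- `G` contains no induced path on `n` vertices. -/
def PFree {V : Type*} (G : SimpleGraph V) (n : ℕ) : Prop :=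
  ¬ ∃ f : Fin n → V, IsInducedPath G n f

/-! ### On-line coloring algorithms and the on-line chromatic number -/

/-- A (deterministic) on-line coloring algorithm: upon presentation of the `(k+1)`-st vertex it
sees the induced subgraph on the first `k+1` vertices in order of presentation (modelled as a
graph on `Fin (k+1)`, the new vertex being the last one) and it outputs the color of the new
vertex. -/
def OnlineAlg : Type := (k : ℕ) → SimpleGraph (Fin (k + 1)) → ℕ

/-- The color that algorithm `A` assigns to the `i`-th presented vertex of the on-line graph
`G` (vertices presented in the order `0, 1, 2, …` of `Fin n`). -/
def runColor (A : OnlineAlg) {n : ℕ} (G : SimpleGraph (Fin n)) (i : Fin n) : ℕ :=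
  A i.val (G.comap (Fin.castLE i.isLt))

/-- An on-line algorithm is required to always produce a proper coloring. -/
def IsProperAlg (A : OnlineAlg) : Prop :=
  ∀ (n : ℕ) (G : SimpleGraph (Fin n)) (i j : Fin n),
    G.Adj i j → runColor A G i ≠ runColor A G j

/-- The number of colors that `A` uses on the on-line graph `G`. -/
def numColors (A : OnlineAlg) {n : ℕ} (G : SimpleGraph (Fin n)) : ℕ :=
  (Finset.univ.image (runColor A G)).card

/-- The on-line chromatic number of a finite graph `G`:
`χ*(G) = inf_A max_π A(G,π)`, the infimum over all proper on-line algorithms of the maximum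
over all enumerations `π` of the vertices of `G` of the number of colors used. -/
noncomputable def onlineChrom (V : Type) [Fintype V] (G : SimpleGraph V) : ℕ :=
  sInf { m : ℕ | ∃ A : OnlineAlg, IsProperAlg A ∧
          ∀ (n : ℕ) (π : Fin n ≃ V), numColors A (G.comap π) ≤ m }

/-! ### Algorithm 1 -/

/-- The three palettes of colors `a_i`, `b_i`, `c_i` used by Algorithm 1. -/
inductive PalColor : Type
  | a : ℕ → PalColor
  | b : ℕ → PalColor
  | c : ℕ → PalColor
  deriving DecidableEq

/-- The index of a color. -/
def PalColor.index : PalColor → ℕ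
  | a i => i
  | b i => i
  | c i => i

/-- A vertex `u` has color index `j` when its color is `a_j` or `b_j`. -/
def hasColorIndex (col : ℕ → PalColor) (u j : ℕ) : Prop :=
  col u = PalColor.a j ∨ col u = PalColor.b j

/-- Vertex set of `G_i[u]` at time `t` (vertices are presented in the order `0, 1, 2, …`):
the vertices presented before time `t` whose color has index between `1` and `i`,
together with `u`. -/
def domSet (col : ℕ → PalColor) (t i u : ℕ) : Set ℕ :=
  {w | (w < t ∧ 1 ≤ (col w).index ∧ (col w).index ≤ i) ∨ w = u}

/-- `x` and `y` are connected within the subgraph of `G` induced on `S`. -/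
def ReachIn (G : SimpleGraph ℕ) (S : Set ℕ) (x y : ℕ) : Prop :=
  ∃ (hx : x ∈ S) (hy : y ∈ S), (G.induce S).Reachable ⟨x, hx⟩ ⟨y, hy⟩

/-- `x` and `y` are joined by a walk of even length within the subgraph of `G` induced on `S`;
in a bipartite graph this says exactly that `x` and `y` are on the same side of their
(common) connected component. -/
def EvenReachIn (G : SimpleGraph ℕ) (S : Set ℕ) (x y : ℕ) : Prop :=
  ∃ (hx : x ∈ S) (hy : y ∈ S) (p : (G.induce S).Walk ⟨x, hx⟩ ⟨y, hy⟩), Even p.length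

/-- `C_i[u]` at time `t`: the connected component of `u` in the subgraph induced on
`domSet col t i u`. -/
def comp (G : SimpleGraph ℕ) (col : ℕ → PalColor) (t i u : ℕ) : Set ℕ :=
  {w | ReachIn G (domSet col t i u) u w}

/-- `C_i^y(u)` at time `t`: the connected component of `y` in `C_i(u) = C_i[u] \ {u}`. -/
def compMinus (G : SimpleGraph ℕ) (col : ℕ → PalColor) (t i u y : ℕ) : Set ℕ :=
  {w | ReachIn G (domSet col t i u \ {u}) y w}

/-- Color `a_i` is mixed in `C_i[t]` at time `t`: vertices on both sides of `C_i[t]`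
have color `a_i`. -/
def MixedA (G : SimpleGraph ℕ) (col : ℕ → PalColor) (t i : ℕ) : Prop :=
  ∃ x ∈ comp G col t i t, ∃ y ∈ comp G col t i t,
    col x = PalColor.a i ∧ col y = PalColor.a i ∧
    ¬ EvenReachIn G (domSet col t i t) x y

/-- `m = max {i ≥ 1 | a_i is mixed in C_i[t]} + 1` (with `max ∅ = 0`). -/
noncomputable def mIdx (G : SimpleGraph ℕ) (col : ℕ → PalColor) (t : ℕ) : ℕ :=
  sSup {i | 1 ≤ i ∧ MixedA G col t i} + 1

/-- `u'` is universal to `C_{j-1}[u]` (at time `t`): `u'` is adjacent to all vertices in one of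
the two sides of `C_{j-1}[u]`. -/
def UnivTo (G : SimpleGraph ℕ) (col : ℕ → PalColor) (t j u u' : ℕ) : Prop :=
  (∀ x ∈ comp G col t (j-1) u, EvenReachIn G (domSet col t (j-1) u) u x → G.Adj u' x) ∨
  (∀ x ∈ comp G col t (j-1) u, ¬ EvenReachIn G (domSet col t (j-1) u) u x → G.Adj u' x)

open Classical in
/-- One step of Algorithm 1: the color given to the vertex presented at time `t`, assuming that
`col` records the colors of the previously presented vertices `0, …, t-1`. -/
noncomputable def step (G : SimpleGraph ℕ) (col : ℕ → PalColor) (t : ℕ) : PalColor :=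
  let m := mIdx G col t
  let S := domSet col t m t
  let C := comp G col t m t
  let I1 : Set ℕ := {x ∈ C | EvenReachIn G S t x}
  let I2 : Set ℕ := {x ∈ C | ¬ EvenReachIn G S t x}
  if ∃ u ∈ I2, col u = PalColor.a m then PalColor.b m
  else if ∃ u ∈ I2, col u = PalColor.c m then PalColor.a m
  else if ∃ u ∈ I1 ∪ I2, ∃ u' ∈ I2, ∃ j : ℕ, hasColorIndex col u j ∧
      ((m : ℝ) - Real.sqrt (2 * m) + 2 ≤ (j : ℝ)) ∧ UnivTo G col t j u u'
    then PalColor.c m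
  else PalColor.a m

/-- The colors of the first `k` presented vertices under Algorithm 1 (junk elsewhere). -/
noncomputable def algoColAux (G : SimpleGraph ℕ) : ℕ → ℕ → PalColor
  | 0 => fun _ => PalColor.a 0
  | (k+1) => fun w => if w = k then step G (algoColAux G k) k else algoColAux G k w

/-- `algoCol G v` is the color that Algorithm 1 assigns to vertex `v` when the on-line graph `G`
is presented in the vertex order `0, 1, 2, …`. -/
noncomputable def algoCol (G : SimpleGraph ℕ) (v : ℕ) : PalColor :=
  algoColAux G (v + 1) v

/-- The on-line graph on `ℕ` obtained by presenting the vertices of `G` in the order given by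
the enumeration `π` (vertices `≥ n` are isolated). -/
def toNatGraph {V : Type*} (G : SimpleGraph V) {n : ℕ} (π : Fin n ≃ V) : SimpleGraph ℕ :=
  SimpleGraph.fromRel (fun i j => ∃ (hi : i < n) (hj : j < n), G.Adj (π ⟨i, hi⟩) (π ⟨j, hj⟩))


/-!
Every on-line algorithm can be forced to use `k + 2` colors on the bipartite graph `X_k`, so it
suffices to find `X_k` inside `C_m[x]` for every vertex `x` that Algorithm 1 colors `a_m`, as soon
as `m` is quadratic in `k`. The graph `X_{k+1}` consists of two disjoint copies of `X_k`, taken with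
opposite orientations, and a root adjacent to all vertices on one side; the two copies sit in
different components of `C_i(u)` for a vertex `u` of color index `i + 1`, since `a_i` is mixed
in `C_i[u]`. A root is available if some vertex is universal to a component `C_{j-1}[u]` with `j`
large. Otherwise `P_9`-freeness provides one: among the components of `C_i(z)` that meet the
neighborhood of `z`, at most one admits an induced path on five vertices starting at `z`, and into
the other one `z` sees enough of the vertices colored with large index to serve as the root.
-/

/-! ### Forcing graphs -/

/-- The vertices of the forcing graph `X_k`. The graph `X_0` is an edge, and `X_{k+1}` consists of
two disjoint copies of `X_k`, one of them with its sides swapped, and a root. -/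
inductive ForcingVertex : ℕ → Type
  | base : Bool → ForcingVertex 0
  | root {k : ℕ} : ForcingVertex (k + 1)
  | copy {k : ℕ} : Bool → ForcingVertex k → ForcingVertex (k + 1)

namespace ForcingVertex

/-- The bipartition of the forcing graph; the copy with label `true` has its sides swapped. -/
def side : {k : ℕ} → ForcingVertex k → Bool
  | _, base b => b
  | _, root => false
  | _, copy e v => e ^^ v.side

/-- Adjacency in the forcing graph: the root is joined to every copied vertex on the other side. -/
def Adj : {k : ℕ} → ForcingVertex k → ForcingVertex k → Prop
  | _, base a, base b => a ≠ b
  | _, root, root => False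
  | _, root, copy e v => (copy e v).side = true
  | _, copy e v, root => (copy e v).side = true
  | _, copy e v, copy e' w => e = e' ∧ v.Adj w

theorem Adj.symm : ∀ {k : ℕ} {v w : ForcingVertex k}, v.Adj w → w.Adj v
  | _, base _, base _, h => Ne.symm h
  | _, root, copy _ _, h => h
  | _, copy _ _, root, h => h
  | _, copy _ _, copy _ _, h => And.intro h.1.symm (Adj.symm h.2)

theorem not_adj_self : ∀ {k : ℕ} (v : ForcingVertex k), ¬ v.Adj v
  | _, base _, h => h rfl
  | _, root, h => h
  | _, copy _ v, h => not_adj_self v h.2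

theorem exists_side_eq : ∀ (k : ℕ) (b : Bool), ∃ v : ForcingVertex k, v.side = b
  | 0, b => ⟨base b, rfl⟩
  | k + 1, b => (exists_side_eq k b).imp' (copy false) fun v hv ↦ by simpa [side] using hv

end ForcingVertex

open ForcingVertex

/-- The forcing graph `X_k`: every on-line graph containing it needs at least `k + 2` colors. -/
def forcingGraph (k : ℕ) : SimpleGraph (ForcingVertex k) where
  Adj := ForcingVertex.Adj
  symm := ⟨fun _ _ ↦ Adj.symm⟩
  loopless := ⟨not_adj_self⟩

namespace forcingGraph

@[simp]
theorem base_adj_base (a b : Bool) : (forcingGraph 0).Adj (base a) (base b) ↔ a ≠ b :=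
  Iff.rfl

@[simp]
theorem copy_adj_copy {k : ℕ} (e e' : Bool) (v w : ForcingVertex k) :
    (forcingGraph (k + 1)).Adj (copy e v) (copy e' w) ↔ e = e' ∧ (forcingGraph k).Adj v w :=
  Iff.rfl

theorem root_adj_iff {k : ℕ} (v : ForcingVertex (k + 1)) :
    (forcingGraph (k + 1)).Adj root v ↔ v.side = true := by
  cases v with
  | root => simp [forcingGraph, side]
  | copy e v => exact Iff.rfl

theorem exists_adj : ∀ {k : ℕ} (v : ForcingVertex k), ∃ w, (forcingGraph k).Adj v w
  | _, base b => ⟨base !b, by simp⟩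
  | k + 1, root => (exists_side_eq (k + 1) true).imp fun v hv ↦ (root_adj_iff v).2 hv
  | _, copy e v => (exists_adj v).imp' (copy e) fun w hw ↦ (copy_adj_copy e e v w).2 ⟨rfl, hw⟩

end forcingGraph

/-! ### On-line coloring of growing graphs on the natural numbers -/

/-- The color that `A` gives to the vertex `i` when the vertices of `Γ` are presented in the
order `0, 1, 2, …`. It depends only on the edges of `Γ` among `0, …, i`, so that `Γ` may still be
changed later on. -/
def onlineColor (A : OnlineAlg) (Γ : SimpleGraph ℕ) (i : ℕ) : ℕ :=
  A i (Γ.comap fun j : Fin (i + 1) ↦ (j : ℕ))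

theorem onlineColor_congr (A : OnlineAlg) {Γ Γ' : SimpleGraph ℕ} {i : ℕ}
    (h : ∀ a ≤ i, ∀ b ≤ i, (Γ.Adj a b ↔ Γ'.Adj a b)) :
    onlineColor A Γ i = onlineColor A Γ' i := by
  unfold onlineColor
  congr 1
  ext a b
  exact h a (Nat.lt_succ_iff.1 a.2) b (Nat.lt_succ_iff.1 b.2)

theorem IsProperAlg.onlineColor_ne {A : OnlineAlg} (hA : IsProperAlg A) {Γ : SimpleGraph ℕ}
    {i j : ℕ} (h : Γ.Adj i j) : onlineColor A Γ i ≠ onlineColor A Γ j :=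
  hA (max i j + 1) (Γ.comap fun a ↦ (a : ℕ)) ⟨i, by omega⟩ ⟨j, by omega⟩ h

/-- `Γ'` arises from `Γ` by presenting the vertices `N, …, N' - 1`, none of which is joined to any
of the vertices `0, …, N - 1`. -/
structure IsExtension (N N' : ℕ) (Γ Γ' : SimpleGraph ℕ) : Prop where
  le : N ≤ N'
  adj_iff : ∀ a < N, ∀ b < N, (Γ.Adj a b ↔ Γ'.Adj a b)
  not_adj : ∀ a < N, ∀ b, N ≤ b → b < N' → ¬ Γ'.Adj a b

namespace IsExtension

variable {N N' N'' : ℕ} {Γ Γ' Γ'' : SimpleGraph ℕ}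

theorem refl (N : ℕ) (Γ : SimpleGraph ℕ) : IsExtension N N Γ Γ where
  le := le_rfl
  adj_iff _ _ _ _ := Iff.rfl
  not_adj _ _ _ h h' := absurd h h'.not_ge

theorem trans (h : IsExtension N N' Γ Γ') (h' : IsExtension N' N'' Γ' Γ'') :
    IsExtension N N'' Γ Γ'' where
  le := h.le.trans h'.le
  adj_iff a ha b hb := (h.adj_iff a ha b hb).trans
    (h'.adj_iff a (ha.trans_le h.le) b (hb.trans_le h.le))
  not_adj a ha b hb hb' hab := by
    have ha' := ha.trans_le h.le
    rcases lt_or_ge b N' with hbN | hbN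
    · exact h.not_adj a ha b hb hbN ((h'.adj_iff a ha' b hbN).2 hab)
    · exact h'.not_adj a ha' b hbN hb' hab

theorem onlineColor_eq (A : OnlineAlg) (h : IsExtension N N' Γ Γ') {i : ℕ} (hi : i < N) :
    onlineColor A Γ i = onlineColor A Γ' i :=
  onlineColor_congr A fun a ha b hb ↦ h.adj_iff a (ha.trans_lt hi) b (hb.trans_lt hi)

end IsExtension

/-- The graph `Γ` in which the neighborhood of the vertex `v` is replaced by `S \ {v}`. -/
def attachVertex (Γ : SimpleGraph ℕ) (v : ℕ) (S : Set ℕ) : SimpleGraph ℕ :=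
  SimpleGraph.fromRel fun a b ↦ a ≠ v ∧ b ≠ v ∧ Γ.Adj a b ∨ a = v ∧ b ∈ S

section attachVertex

variable {Γ Γ' : SimpleGraph ℕ} {N M v : ℕ} {S : Set ℕ}

theorem attachVertex_adj_of_ne {a b : ℕ} (ha : a ≠ v) (hb : b ≠ v) :
    (attachVertex Γ v S).Adj a b ↔ Γ.Adj a b := by
  simpa [attachVertex, ha, hb, Γ.adj_comm b a] using fun h : Γ.Adj a b ↦ h.ne

theorem attachVertex_adj_self {b : ℕ} (hb : b ≠ v) : (attachVertex Γ v S).Adj v b ↔ b ∈ S := by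
  simp [attachVertex, hb, hb.symm]

theorem onlineColor_attachVertex (A : OnlineAlg) {i : ℕ} (hi : i < v) :
    onlineColor A (attachVertex Γ v S) i = onlineColor A Γ i :=
  onlineColor_congr A fun _ ha _ hb ↦
    attachVertex_adj_of_ne (ha.trans_lt hi).ne (hb.trans_lt hi).ne

theorem IsExtension.attachVertex (h : IsExtension N M Γ Γ') (hS : ∀ a ∈ S, N ≤ a) :
    IsExtension N (M + 1) Γ (attachVertex Γ' M S) where
  le := h.le.trans M.le_succ
  adj_iff a ha b hb := by
    have := h.le
    rw [attachVertex_adj_of_ne (by omega) (by omega), h.adj_iff a ha b hb]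
  not_adj a ha b hb hb' hab := by
    have haM : a ≠ M := (ha.trans_le h.le).ne
    rcases eq_or_ne b M with rfl | hbM
    · exact (hS a ((attachVertex_adj_self haM).1 hab.symm)).not_gt ha
    · exact h.not_adj a ha b hb (by omega) ((attachVertex_adj_of_ne haM hbM).1 hab)

end attachVertex

/-- The vertices of `Γ` in `I` induce a subgraph of the forcing graph `X_k` via `φ`, and on the side
`b` of `X_k` they receive, among others, the colors in `F b`. -/
structure IsDisplay (A : OnlineAlg) (Γ : SimpleGraph ℕ) (I : Finset ℕ) {k : ℕ}
    (φ : ℕ → ForcingVertex k) (F : Bool → Finset ℕ) : Prop where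
  injOn : Set.InjOn φ I
  adj_iff : ∀ i ∈ I, ∀ j ∈ I, (Γ.Adj i j ↔ (forcingGraph k).Adj (φ i) (φ j))
  exists_color : ∀ b, ∀ c ∈ F b, ∃ i ∈ I, (φ i).side = b ∧ onlineColor A Γ i = c

/-- Some map displays `I` in the forcing graph `X_k` with the colors `F`. -/
def Displays (A : OnlineAlg) (Γ : SimpleGraph ℕ) (I : Finset ℕ) (k : ℕ)
    (F : Bool → Finset ℕ) : Prop :=
  ∃ φ : ℕ → ForcingVertex k, IsDisplay A Γ I φ F

section Displays

open Finset

variable {A : OnlineAlg} {Γ Γ' : SimpleGraph ℕ} {I J : Finset ℕ} {k N N' : ℕ}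
  {φ ψ : ℕ → ForcingVertex k} {F F' : Bool → Finset ℕ}

theorem IsDisplay.of_isExtension (hφ : IsDisplay A Γ I φ F) (h : IsExtension N N' Γ Γ')
    (hI : ∀ i ∈ I, i < N) : IsDisplay A Γ' I φ F where
  injOn := hφ.injOn
  adj_iff i hi j hj := (h.adj_iff i (hI i hi) j (hI j hj)).symm.trans (hφ.adj_iff i hi j hj)
  exists_color b c hc := by
    obtain ⟨i, hi, hside, hcol⟩ := hφ.exists_color b c hc
    exact ⟨i, hi, hside, (h.onlineColor_eq A (hI i hi)).symm.trans hcol⟩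

theorem IsDisplay.copy_union (hφ : IsDisplay A Γ I φ F) (hψ : IsDisplay A Γ J ψ F')
    (hIJ : Disjoint I J) (hadj : ∀ i ∈ I, ∀ j ∈ J, ¬ Γ.Adj i j) :
    IsDisplay A Γ (I ∪ J) (fun i ↦ if i ∈ I then copy false (φ i) else copy true (ψ i))
      fun b ↦ F b ∪ F' !b where
  injOn := by
    intro i hi j hj hij
    rcases mem_union.1 (mem_coe.1 hi) with hiI | hiJ <;>
      rcases mem_union.1 (mem_coe.1 hj) with hjI | hjJ
    · exact hφ.injOn hiI hjI (by simpa [hiI, hjI] using hij)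
    · simp [hiI, disjoint_right.1 hIJ hjJ] at hij
    · simp [hjI, disjoint_right.1 hIJ hiJ] at hij
    · exact hψ.injOn hiJ hjJ
        (by simpa [disjoint_right.1 hIJ hiJ, disjoint_right.1 hIJ hjJ] using hij)
  adj_iff := by
    intro i hi j hj
    rcases mem_union.1 hi with hiI | hiJ <;> rcases mem_union.1 hj with hjI | hjJ
    · simp [hiI, hjI, hφ.adj_iff i hiI j hjI]
    · simp [hiI, disjoint_right.1 hIJ hjJ, hadj i hiI j hjJ]
    · simpa [hjI, disjoint_right.1 hIJ hiJ] using fun h ↦ hadj j hjI i hiJ h.symm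
    · simp [disjoint_right.1 hIJ hiJ, disjoint_right.1 hIJ hjJ, hψ.adj_iff i hiJ j hjJ]
  exists_color := by
    intro b c hc
    rcases mem_union.1 hc with hc | hc
    · obtain ⟨i, hi, hside, hcol⟩ := hφ.exists_color b c hc
      exact ⟨i, mem_union_left J hi, by simp [hi, side, hside], hcol⟩
    · obtain ⟨i, hi, hside, hcol⟩ := hψ.exists_color (!b) c hc
      exact ⟨i, mem_union_right I hi, by simp [disjoint_right.1 hIJ hi, side, hside], hcol⟩

theorem IsDisplay.insert_root {φ : ℕ → ForcingVertex (k + 1)} {v : ℕ} (hφ : IsDisplay A Γ I φ F)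
    (hroot : ∀ i ∈ I, φ i ≠ root) (hI : ∀ i ∈ I, i < v)
    (hΓ' : Γ' = attachVertex Γ v {i | i ∈ I ∧ (φ i).side = true}) :
    IsDisplay A Γ' (insert v I) (Function.update φ v root)
      (Function.update F false (insert (onlineColor A Γ' v) (F false))) := by
  have hne : ∀ i ∈ I, i ≠ v := fun i hi ↦ (hI i hi).ne
  have hold : ∀ i ∈ I, ∀ j ∈ I, (Γ'.Adj i j ↔ Γ.Adj i j) := fun i hi j hj ↦
    hΓ' ▸ attachVertex_adj_of_ne (hne i hi) (hne j hj)
  have hnew : ∀ i ∈ I, (Γ'.Adj v i ↔ (φ i).side = true) := fun i hi ↦ by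
    simp [hΓ', attachVertex_adj_self (hne i hi), hi]
  refine ⟨?_, ?_, ?_⟩
  · rw [coe_insert, Set.injOn_insert fun hv ↦ hne v hv rfl]
    refine ⟨hφ.injOn.congr fun i hi ↦ (Function.update_of_ne (hne i hi) _ _).symm, ?_⟩
    rintro ⟨i, hi, hiv⟩
    rw [Function.update_of_ne (hne i hi), Function.update_self] at hiv
    exact hroot i hi hiv
  · intro i hi j hj
    rcases mem_insert.1 hi with rfl | hiI <;> rcases mem_insert.1 hj with rfl | hjI
    · simp
    · simp [hne j hjI, hnew j hjI, forcingGraph.root_adj_iff]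
    · simp [hne i hiI, Γ'.adj_comm i, hnew i hiI, forcingGraph.root_adj_iff,
        (forcingGraph (k + 1)).adj_comm _ root]
    · simp [hne i hiI, hne j hjI, hold i hiI j hjI, hφ.adj_iff i hiI j hjI]
  · have hcolor : ∀ b, ∀ c ∈ F b, ∃ i ∈ insert v I, (Function.update φ v root i).side = b ∧
        onlineColor A Γ' i = c := by
      intro b c hc
      obtain ⟨i, hi, hside, hcol⟩ := hφ.exists_color b c hc
      exact ⟨i, mem_insert_of_mem hi, by simp [hne i hi, hside],
        hΓ' ▸ (onlineColor_attachVertex A (hI i hi)).trans hcol⟩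
    rintro (_ | _) c hc
    · rcases mem_insert.1 (by simpa using hc) with rfl | hc
      · exact ⟨v, mem_insert_self v I, by simp [side], rfl⟩
      · exact hcolor false c hc
    · exact hcolor true c (by simpa using hc)

end Displays

/-! ### Forcing colors on the forcing graphs -/

/-- Among the color distributions satisfying `R` there is one with at least `κ` colors on each side,
and with more than `κ` colors on the side `false` unless the two sides have different colors and may
be exchanged. This is the invariant that lets two copies of a forcing graph be combined. -/
def IsForcing (κ : ℕ) (R : (Bool → Finset ℕ) → Prop) : Prop :=
  ∃ F, R F ∧ (∀ b, κ ≤ (F b).card) ∧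
    (κ < (F false).card ∨ F false ≠ F true ∧ R fun b ↦ F !b)

section IsForcing

open Finset

variable {κ : ℕ} {R R' : (Bool → Finset ℕ) → Prop}

theorem IsForcing.mono (hR : ∀ F, R F → R' F) (h : IsForcing κ R) : IsForcing κ R' :=
  h.imp fun F hF ↦ ⟨hR F hF.1, hF.2.1, hF.2.2.imp_right (And.imp_right (hR _))⟩

theorem lt_card_union_of_ne {α : Type*} [DecidableEq α] {s t : Finset α} (hs : κ ≤ s.card)
    (ht : κ ≤ t.card) (hst : s ≠ t) : κ < (s ∪ t).card := by
  by_contra! h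
  have hs' : s = s ∪ t := eq_of_subset_of_card_le subset_union_left (h.trans hs)
  have ht' : t = s ∪ t := eq_of_subset_of_card_le subset_union_right (h.trans ht)
  exact hst (hs'.trans ht'.symm)

theorem IsForcing.exists_lt_card_union (h : IsForcing κ R) :
    ∃ F, R F ∧ κ < (F false ∪ F true).card := by
  obtain ⟨F, hF, hκ, hlt | ⟨hne, -⟩⟩ := h
  · exact ⟨F, hF, hlt.trans_le (card_le_card subset_union_left)⟩
  · exact ⟨F, hF, lt_card_union_of_ne (hκ _) (hκ _) hne⟩

theorem IsForcing.combine (h : IsForcing κ R) (h' : IsForcing κ R') :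
    ∃ F F', R F ∧ R' F' ∧ ∀ b, κ < (F b ∪ F' !b).card := by
  obtain ⟨F, hF, hκ, hcase⟩ := h
  obtain ⟨F', hF', hκ', hcase'⟩ := h'
  have hunion {b b' : Bool} (hne : F b ≠ F' b') : κ < (F b ∪ F' b').card :=
    lt_card_union_of_ne (hκ b) (hκ' b') hne
  have hleft (s : Finset ℕ) (hlt : κ < (F false).card) : κ < (F false ∪ s).card :=
    hlt.trans_le (card_le_card subset_union_left)
  have hright (s : Finset ℕ) (hlt : κ < (F' false).card) : κ < (s ∪ F' false).card :=
    hlt.trans_le (card_le_card subset_union_right)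
  rcases hcase with hlt | ⟨hne, hswap⟩ <;> rcases hcase' with hlt' | ⟨hne', hswap'⟩
  · exact ⟨F, F', hF, hF', Bool.forall_bool.2 ⟨hleft _ hlt, hright _ hlt'⟩⟩
  · by_cases heq : F true = F' false
    · exact ⟨F, _, hF, hswap', Bool.forall_bool.2 ⟨hleft _ hlt, hunion (heq ▸ hne')⟩⟩
    · exact ⟨F, F', hF, hF', Bool.forall_bool.2 ⟨hleft _ hlt, hunion heq⟩⟩
  · by_cases heq : F false = F' true
    · exact ⟨_, F', hswap, hF', Bool.forall_bool.2 ⟨hunion (heq ▸ hne.symm), hright _ hlt'⟩⟩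
    · exact ⟨F, F', hF, hF', Bool.forall_bool.2 ⟨hunion heq, hright _ hlt'⟩⟩
  · by_cases heq : F false = F' true ∨ F true = F' false
    · refine ⟨F, _, hF, hswap', Bool.forall_bool.2 ⟨hunion ?_, hunion ?_⟩⟩
      · rintro (h : F false = F' false)
        grind
      · rintro (h : F true = F' true)
        grind
    · rw [not_or] at heq
      exact ⟨F, F', hF, hF', Bool.forall_bool.2 ⟨hunion heq.1, hunion heq.2⟩⟩

variable {A : OnlineAlg}

theorem IsDisplay.exists_isForcing_succ (hA : IsProperAlg A) {Γ Γ₁ : SimpleGraph ℕ} {N M k : ℕ}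
    (hext : IsExtension N M Γ Γ₁) {φ : ℕ → ForcingVertex (k + 1)} {F : Bool → Finset ℕ}
    (hφ : IsDisplay A Γ₁ (Ico N M) φ F) (hroot : ∀ i ∈ Ico N M, φ i ≠ root)
    (hF : ∀ b, κ ≤ (F b).card) (heq : F false = F true) :
    ∃ N' Γ', IsExtension N N' Γ Γ' ∧ IsForcing κ (Displays A Γ' (Ico N N') (k + 1)) := by
  set Γ' := attachVertex Γ₁ M {i | i ∈ Ico N M ∧ (φ i).side = true} with hΓ'
  have hlt : ∀ i ∈ Ico N M, i < M := fun i hi ↦ (mem_Ico.1 hi).2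
  have hdisp := hφ.insert_root hroot hlt hΓ'
  rw [insert_Ico_right_eq_Ico_add_one hext.le] at hdisp
  have hnew : onlineColor A Γ' M ∉ F false := by
    intro hmem
    obtain ⟨i, hi, hside, hcol⟩ := hφ.exists_color true _ (heq ▸ hmem)
    have hadj : Γ'.Adj M i := (attachVertex_adj_self (hlt i hi).ne).2 ⟨hi, hside⟩
    exact hA.onlineColor_ne hadj
      (hcol.symm.trans (onlineColor_attachVertex A (hlt i hi)).symm)
  refine ⟨M + 1, Γ', hext.attachVertex fun a ha ↦ (mem_Ico.1 ha.1).1, _, ⟨_, hdisp⟩, ?_, .inl ?_⟩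
  · rintro (_ | _)
    · simpa using (hF false).trans (card_le_card (subset_insert _ _))
    · simpa using hF true
  · simpa [card_insert_of_notMem hnew, Nat.lt_succ_iff] using hF false

theorem exists_isForcing_zero (hA : IsProperAlg A) (N : ℕ) (Γ : SimpleGraph ℕ) :
    ∃ N' Γ', IsExtension N N' Γ Γ' ∧ IsForcing 1 (Displays A Γ' (Ico N N') 0) := by
  set Γ' := attachVertex (attachVertex Γ N ∅) (N + 1) {N} with hΓ'
  have hadj : Γ'.Adj (N + 1) N := (attachVertex_adj_self (Nat.lt_succ_self N).ne).2 rfl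
  have hcol := hA.onlineColor_ne hadj
  have hIco {i : ℕ} : i ∈ Ico N (N + 2) ↔ i = N ∨ i = N + 1 := by rw [mem_Ico]; omega
  have hdisp (e : Bool) : IsDisplay A Γ' (Ico N (N + 2))
      (fun i ↦ base (e ^^ decide (i = N)))
      fun b ↦ {if b = e then onlineColor A Γ' (N + 1) else onlineColor A Γ' N} := by
    refine ⟨?_, ?_, ?_⟩
    · intro i hi j hj hij
      rw [mem_coe, hIco] at hi hj
      rcases hi with rfl | rfl <;> rcases hj with rfl | rfl <;> simp_all
    · intro i hi j hj
      rw [hIco] at hi hj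
      rcases hi with rfl | rfl <;> rcases hj with rfl | rfl <;> simp [hadj, hadj.symm]
    · intro b c hc
      by_cases hb : b = e
      · exact ⟨N + 1, by simp, by simp [side, hb], by simpa [hb, eq_comm] using hc⟩
      · exact ⟨N, by simp, by cases b <;> cases e <;> simp_all [side],
          by simpa [hb, eq_comm] using hc⟩
  have hswap : Displays A Γ' (Ico N (N + 2)) 0 _ := ⟨_, hdisp true⟩
  refine ⟨N + 2, Γ', ((IsExtension.refl N Γ).attachVertex (by simp)).attachVertex (by simp),
    _, ⟨_, hdisp false⟩, by simp, .inr ⟨by simpa using hcol, ?_⟩⟩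
  simpa using hswap

theorem exists_isForcing (hA : IsProperAlg A) : ∀ (k N : ℕ) (Γ : SimpleGraph ℕ),
    ∃ N' Γ', IsExtension N N' Γ Γ' ∧ IsForcing (k + 1) (Displays A Γ' (Ico N N') k)
  | 0, N, Γ => exists_isForcing_zero hA N Γ
  | k + 1, N, Γ => by
    obtain ⟨N₁, Γ₁, hext₁, hforce₁⟩ := exists_isForcing hA k N Γ
    obtain ⟨N₂, Γ₂, hext₂, hforce₂⟩ := exists_isForcing hA k N₁ Γ₁
    have hkeep : ∀ F, Displays A Γ₁ (Ico N N₁) k F → Displays A Γ₂ (Ico N N₁) k F :=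
      fun F hF ↦ hF.imp fun φ hφ ↦ hφ.of_isExtension hext₂ fun i hi ↦ (mem_Ico.1 hi).2
    obtain ⟨F₁, F₂, ⟨φ₁, hφ₁⟩, ⟨φ₂, hφ₂⟩, hF⟩ := (hforce₁.mono hkeep).combine hforce₂
    have hdisj : Disjoint (Ico N N₁) (Ico N₁ N₂) := Ico_disjoint_Ico_consecutive N N₁ N₂
    have hunion : Ico N N₁ ∪ Ico N₁ N₂ = Ico N N₂ := Ico_union_Ico_eq_Ico hext₁.le hext₂.le
    have hsep : ∀ i ∈ Ico N N₁, ∀ j ∈ Ico N₁ N₂, ¬ Γ₂.Adj i j := fun i hi j hj ↦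
      hext₂.not_adj i (mem_Ico.1 hi).2 j (mem_Ico.1 hj).1 (mem_Ico.1 hj).2
    have hdisp := hφ₁.copy_union hφ₂ hdisj hsep
    have hswap : Displays A Γ₂ (Ico N₁ N₂ ∪ Ico N N₁) (k + 1) _ :=
      ⟨_, hφ₂.copy_union hφ₁ hdisj.symm fun j hj i hi h ↦ hsep i hi j hj h.symm⟩
    rw [hunion] at hdisp
    rw [union_comm, hunion] at hswap
    by_cases heq : F₁ false ∪ F₂ true = F₁ true ∪ F₂ false
    · refine hdisp.exists_isForcing_succ hA (hext₁.trans hext₂) (fun i _ ↦ ?_) hF heq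
      split_ifs <;> simp
    · refine ⟨N₂, Γ₂, hext₁.trans hext₂, _, ⟨_, hdisp⟩, hF, .inr ⟨heq, ?_⟩⟩
      simpa [union_comm] using hswap

end IsForcing

/-! ### A lower bound for the on-line chromatic number -/

section LowerBound

open Finset

variable {V : Type} {G : SimpleGraph V}

theorem numColors_comap_ge {A : OnlineAlg} {Γ : SimpleGraph ℕ} {N n : ℕ} (hN : N ≤ n)
    (π : Fin n ≃ V)
    (hπ : ∀ i j : Fin n, i.val < N → j.val < N → (G.Adj (π i) (π j) ↔ Γ.Adj i j)) :
    ((range N).image (onlineColor A Γ)).card ≤ numColors A (G.comap π) := by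
  refine card_le_card fun c hc ↦ ?_
  obtain ⟨i, hi, rfl⟩ := mem_image.1 hc
  have hiN : i < N := mem_range.1 hi
  refine mem_image.2 ⟨⟨i, hiN.trans_le hN⟩, mem_univ _, ?_⟩
  unfold runColor onlineColor
  congr 1
  ext a b
  exact hπ _ _ ((Nat.lt_succ_iff.1 a.2).trans_lt hiN) ((Nat.lt_succ_iff.1 b.2).trans_lt hiN)

variable [Fintype V]

theorem exists_isProperAlg_numColors_le_onlineChrom (G : SimpleGraph V) :
    ∃ A : OnlineAlg, IsProperAlg A ∧
      ∀ (n : ℕ) (π : Fin n ≃ V), numColors A (G.comap π) ≤ onlineChrom V G := by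
  refine Nat.sInf_mem (s := {m | ∃ A : OnlineAlg, IsProperAlg A ∧
    ∀ (n : ℕ) (π : Fin n ≃ V), numColors A (G.comap π) ≤ m})
    ⟨Fintype.card V, fun k _ ↦ k, fun n G i j h hij ↦ h.ne (Fin.ext hij), fun n π ↦ ?_⟩
  exact card_image_le.trans_eq (by simpa using Fintype.card_congr π)

theorem exists_equiv_forall_lt_eq {N : ℕ} {f : ℕ → V} (hf : Set.InjOn f (range N)) :
    ∃ π : Fin (Fintype.card V) ≃ V, ∀ i : Fin (Fintype.card V), i.val < N → π i = f i := by
  classical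
  obtain ⟨π, hπ⟩ := Finset.exists_equiv_extend_of_card_eq (t := (univ : Finset V)) (by simp)
    (s := univ.filter fun i : Fin (Fintype.card V) ↦ i.val < N) (f := fun i ↦ f i) (subset_univ _)
    fun i hi j hj hij ↦ Fin.ext (hf (by simpa using hi) (by simpa using hj) hij)
  exact ⟨π.trans (Equiv.subtypeUnivEquiv mem_univ), fun i hi ↦ hπ i (by simpa using hi)⟩

theorem le_onlineChrom_of_forcingGraph_embedding {k : ℕ} (f : forcingGraph k ↪g G) :
    k + 2 ≤ onlineChrom V G := by
  obtain ⟨A, hA, hχ⟩ := exists_isProperAlg_numColors_le_onlineChrom G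
  obtain ⟨N, Γ, -, hforce⟩ := exists_isForcing hA k 0 ⊥
  rw [← range_eq_Ico] at hforce
  obtain ⟨F, ⟨φ, hφ⟩, hcard⟩ := hforce.exists_lt_card_union
  have hinj : Set.InjOn (fun i ↦ f (φ i)) (range N) := f.injective.comp_injOn hφ.injOn
  have hN : N ≤ Fintype.card V := by
    simpa using card_le_card_of_injOn (t := univ) _ (fun _ _ ↦ mem_univ _) hinj
  obtain ⟨π, hπ⟩ := exists_equiv_forall_lt_eq hinj
  have hcolors : F false ∪ F true ⊆ (range N).image (onlineColor A Γ) := by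
    intro c hc
    rw [mem_image]
    rcases mem_union.1 hc with hc | hc <;>
      exact (hφ.exists_color _ c hc).imp fun i hi ↦ ⟨hi.1, hi.2.2⟩
  calc k + 2 ≤ (F false ∪ F true).card := hcard
    _ ≤ ((range N).image (onlineColor A Γ)).card := card_le_card hcolors
    _ ≤ numColors A (G.comap π) := numColors_comap_ge hN π fun i j hi hj ↦ by
      rw [hπ i hi, hπ j hj, f.map_adj_iff, hφ.adj_iff i (mem_range.2 hi) j (mem_range.2 hj)]
    _ ≤ onlineChrom V G := hχ _ π

theorem onlineChrom_pos [Nonempty V] : 0 < onlineChrom V G := by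
  obtain ⟨A, -, hχ⟩ := exists_isProperAlg_numColors_le_onlineChrom G
  obtain ⟨v⟩ := ‹Nonempty V›
  let π := (Fintype.equivFin V).symm
  exact (card_pos.2 ⟨_, mem_image_of_mem _ (mem_univ (π.symm v))⟩).trans_le (hχ _ π)

end LowerBound

/-! ### Forcing graphs inside a bipartite graph -/

section HasForcing

variable {V : Type*} {H : SimpleGraph V} {σ : H.Coloring Bool} {k : ℕ} {s : Bool} {p x y : V}
  {S T : Set V}

theorem bool_eq_of_ne_of_ne {a b c : Bool} (ha : a ≠ c) (hb : b ≠ c) : a = b :=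
  (Bool.eq_not_of_ne ha).trans (Bool.eq_not_of_ne hb).symm

/-- The vertex `p` is adjacent to all vertices of `S` on the side opposite to `p`. -/
def IsUniversalTo (σ : H.Coloring Bool) (p : V) (S : Set V) : Prop :=
  ∀ x ∈ S, σ x ≠ σ p → H.Adj p x

theorem IsUniversalTo.mono (hST : S ⊆ T) (h : IsUniversalTo σ p T) : IsUniversalTo σ p S :=
  fun x hx ↦ h x (hST hx)

/-- `S` contains an induced copy of the forcing graph `X_k` whose side `false` lies on the side `s`
of the bipartition `σ`. -/
def HasForcing (σ : H.Coloring Bool) (k : ℕ) (s : Bool) (S : Set V) : Prop :=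
  ∃ f : forcingGraph k ↪g H, ∀ v, σ (f v) = (v.side ^^ s) ∧ f v ∈ S

theorem HasForcing.mono (hST : S ⊆ T) (h : HasForcing σ k s S) : HasForcing σ k s T :=
  h.imp fun _ hf v ↦ (hf v).imp_right fun hv ↦ hST hv

theorem hasForcing_zero (hadj : H.Adj x y) (hx : x ∈ S) (hy : y ∈ S) : HasForcing σ 0 s S := by
  wlog hs : σ x = s generalizing x y
  · exact this hadj.symm hy hx (bool_eq_of_ne_of_ne (σ.valid hadj).symm (Ne.symm hs))
  have hsy : σ y = !s := Bool.eq_not_of_ne fun h ↦ σ.valid hadj (hs.trans h.symm)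
  let g : ForcingVertex 0 → V
    | base b => if b then y else x
  have hinj : g.Injective := by
    rintro ⟨a⟩ ⟨b⟩ hab
    cases a <;> cases b <;> simp_all [g, hadj.ne, hadj.ne']
  have hiff : ∀ a b, H.Adj (g a) (g b) ↔ (forcingGraph 0).Adj a b := by
    rintro ⟨a⟩ ⟨b⟩
    cases a <;> cases b <;> simp [g, hadj, hadj.symm]
  refine ⟨⟨⟨g, hinj⟩, hiff _ _⟩, ?_⟩
  rintro ⟨b⟩
  change σ (if b then y else x) = (b ^^ s) ∧ (if b then y else x) ∈ S
  cases b <;> simp [hs, hsy, hx, hy]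

theorem exists_embedding_forcingGraph_succ {f : Bool → forcingGraph k ↪g H}
    (hroot : ∀ e v, H.Adj p (f e v) ↔ (copy e v).side = true)
    (hsep : ∀ e e', e ≠ e' → ∀ v w, ¬ H.Adj (f e v) (f e' w)) :
    ∃ g : forcingGraph (k + 1) ↪g H, g root = p ∧ ∀ e v, g (copy e v) = f e v := by
  let g : ForcingVertex (k + 1) → V
    | root => p
    | copy e v => f e v
  have hroot_ne (e v) : p ≠ f e v := by
    intro hpv
    obtain ⟨w, hw⟩ := exists_side_eq k e
    refine hsep e (!e) (Bool.not_ne_self e).symm v w (hpv ▸ (hroot (!e) w).2 ?_)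
    simp [side, hw]
  have hinj : g.Injective := by
    rintro (_ | _ | ⟨e, v⟩) (_ | _ | ⟨e', w⟩) h
    · rfl
    · exact absurd h (hroot_ne e' w)
    · exact absurd h.symm (hroot_ne e v)
    · rcases eq_or_ne e e' with rfl | hne
      · rw [(f e).injective h]
      · obtain ⟨u, hu⟩ := forcingGraph.exists_adj v
        have huw : H.Adj (f e u) (g (copy e' w)) := h ▸ (f e).map_adj_iff.2 hu.symm
        exact absurd huw (hsep e e' hne u w)
  have hiff : ∀ v w, H.Adj (g v) (g w) ↔ (forcingGraph (k + 1)).Adj v w := by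
    rintro (_ | _ | ⟨e, v⟩) (_ | _ | ⟨e', w⟩)
    · simp [g]
    · exact (hroot e' w).trans (forcingGraph.root_adj_iff _).symm
    · rw [H.adj_comm, (forcingGraph (k + 1)).adj_comm]
      exact (hroot e v).trans (forcingGraph.root_adj_iff _).symm
    · rcases eq_or_ne e e' with rfl | hne
      · simp [g]
      · simp [g, hne, hsep e e' hne v w]
  exact ⟨⟨⟨g, hinj⟩, hiff _ _⟩, rfl, fun _ _ ↦ rfl⟩

theorem HasForcing.join {S : Bool → Set V} (hS : ∀ e, HasForcing σ k (e ^^ σ p) (S e))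
    (hsep : ∀ e e', e ≠ e' → ∀ x ∈ S e, ∀ y ∈ S e', ¬ H.Adj x y)
    (hp : ∀ e, IsUniversalTo σ p (S e)) : HasForcing σ (k + 1) (σ p) (insert p (⋃ e, S e)) := by
  choose f hf using hS
  have hside (e v) : σ (f e v) = ((copy e v).side ^^ σ p) := by
    simp only [(hf e v).1, side, Bool.xor_assoc, Bool.xor_left_comm]
  have hroot (e v) : H.Adj p (f e v) ↔ (copy e v).side = true := by
    have hiff : σ (f e v) ≠ σ p ↔ (copy e v).side = true := by
      rw [hside]
      cases (copy e v).side <;> simp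
    rw [← hiff]
    exact ⟨fun h ↦ (σ.valid h).symm, hp e _ (hf e v).2⟩
  obtain ⟨g, hgroot, hgcopy⟩ := exists_embedding_forcingGraph_succ hroot
    fun e e' hne v w ↦ hsep e e' hne _ (hf e v).2 _ (hf e' w).2
  refine ⟨g, fun v ↦ ?_⟩
  match v with
  | root => simp [hgroot, side]
  | copy e v =>
    rw [hgcopy]
    exact ⟨hside e v, Set.mem_insert_of_mem p (Set.mem_iUnion_of_mem e (hf e v).2)⟩

end HasForcing

/-! ### Connectedness within a set of vertices -/

namespace ReachIn

variable {H : SimpleGraph ℕ} {S T : Set ℕ} {v w x y z : ℕ}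

theorem mem_left (h : ReachIn H S x y) : x ∈ S := h.1

theorem mem_right (h : ReachIn H S x y) : y ∈ S := h.2.1

theorem refl (hx : x ∈ S) : ReachIn H S x x := ⟨hx, hx, .refl _⟩

theorem symm (h : ReachIn H S x y) : ReachIn H S y x := ⟨h.mem_right, h.mem_left, h.2.2.symm⟩

theorem trans (h : ReachIn H S x y) (h' : ReachIn H S y z) : ReachIn H S x z :=
  ⟨h.mem_left, h'.mem_right, h.2.2.trans h'.2.2⟩

theorem of_adj (hx : x ∈ S) (hy : y ∈ S) (h : H.Adj x y) : ReachIn H S x y :=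
  ⟨hx, hy, SimpleGraph.Adj.reachable (by simpa using h)⟩

theorem step (h : ReachIn H S x y) (hadj : H.Adj y z) (hz : z ∈ S) : ReachIn H S x z :=
  h.trans (of_adj h.mem_right hz hadj)

theorem exists_boundary (h : ReachIn H S x y) (hx : x ∈ T) (hy : y ∉ T) :
    ∃ u v, ReachIn H S x u ∧ ReachIn H S x v ∧ H.Adj u v ∧ u ∈ T ∧ v ∉ T := by
  obtain ⟨hxS, hyS, ⟨p⟩⟩ := h
  obtain ⟨d, -, hu, hv⟩ := p.exists_boundary_dart {z | ReachIn H S x z ∧ z.1 ∈ T}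
    ⟨refl hxS, hx⟩ fun h ↦ hy h.2
  have hadj : H.Adj d.fst d.snd := by simpa using d.adj
  have hreach := hu.1.step hadj d.snd.2
  exact ⟨d.fst, d.snd, hu.1, hreach, hadj, hu.2, fun hT ↦ hv ⟨hreach, hT⟩⟩

theorem induction_on {P : ℕ → Prop} (h : ReachIn H S x y) (hx : P x)
    (hstep : ∀ u v, ReachIn H S x u → P u → H.Adj u v → v ∈ S → P v) : P y := by
  by_contra hy
  obtain ⟨u, v, hu, hv, hadj, hPu, hPv⟩ := h.exists_boundary (T := {z | P z}) hx hy
  exact hPv (hstep u v hu hPu hadj hv.mem_right)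

theorem mono (hST : S ⊆ T) (h : ReachIn H S x y) : ReachIn H T x y :=
  h.induction_on (refl (hST h.mem_left)) fun _ _ _ hu hadj hv ↦ hu.step hadj (hST hv)

theorem exists_adj_of_insert (h : ReachIn H (insert v S) v w) (hw : w ≠ v) :
    ∃ p, H.Adj v p ∧ ReachIn H S p w := by
  refine (h.induction_on (P := fun w ↦ w = v ∨ ∃ p, H.Adj v p ∧ ReachIn H S p w) (.inl rfl)
    fun a b _ ha hadj hb ↦ ?_).resolve_left hw
  rcases hb with rfl | hbS
  · exact .inl rfl
  rcases ha with rfl | ⟨p, hp, hpa⟩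
  · exact .inr ⟨b, hadj, refl hbS⟩
  · exact .inr ⟨p, hp, hpa.step hadj hbS⟩

theorem of_insert (h : ReachIn H (insert v S) x y) (hv : ¬ ReachIn H (insert v S) x v) :
    ReachIn H S x y := by
  have hmem : ∀ z, ReachIn H (insert v S) x z → z ∈ S := fun z hz ↦
    hz.mem_right.resolve_left fun hzv ↦ hv (hzv ▸ hz)
  exact h.induction_on (refl (hmem x (refl h.mem_left))) fun u w hu hSu hadj hw ↦
    hSu.step hadj (hmem w (hu.step hadj hw))

end ReachIn

theorem evenReachIn_iff {H : SimpleGraph ℕ} (σ : H.Coloring Bool) {S : Set ℕ} {x y : ℕ} :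
    EvenReachIn H S x y ↔ ReachIn H S x y ∧ σ x = σ y := by
  let τ : (H.induce S).Coloring Bool := σ.comp (SimpleGraph.Embedding.induce S).toHom
  have heven {hx : x ∈ S} {hy : y ∈ S} (p : (H.induce S).Walk ⟨x, hx⟩ ⟨y, hy⟩) :
      Even p.length ↔ σ x = σ y := (τ.even_length_iff_congr p).trans Bool.eq_iff_iff.symm
  constructor
  · rintro ⟨hx, hy, p, hp⟩
    exact ⟨⟨hx, hy, ⟨p⟩⟩, (heven p).1 hp⟩
  · rintro ⟨⟨hx, hy, ⟨p⟩⟩, hxy⟩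
    exact ⟨hx, hy, p, (heven p).2 hxy⟩

/-! ### The components built by Algorithm 1 -/

section Algorithm

variable {H : SimpleGraph ℕ} {t i m u v w x y : ℕ}

theorem algoColAux_eq_ite (H : SimpleGraph ℕ) (t w : ℕ) :
    algoColAux H t w = if w < t then algoCol H w else .a 0 := by
  induction t with
  | zero => rfl
  | succ t ih =>
    rcases lt_trichotomy w t with hw | rfl | hw
    · simp [algoColAux, hw.ne, ih, hw, hw.trans (Nat.lt_succ_self t)]
    · simp [algoCol]
    · simp [algoColAux, hw.ne', ih, hw.not_gt, Nat.not_lt.2 hw]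

theorem algoCol_eq_step (H : SimpleGraph ℕ) (t : ℕ) :
    algoCol H t = step H (algoColAux H t) t := by
  simp [algoCol, algoColAux]

theorem index_algoCol (H : SimpleGraph ℕ) (t : ℕ) :
    (algoCol H t).index = mIdx H (algoColAux H t) t := by
  rw [algoCol_eq_step]
  dsimp only [step]
  split_ifs <;> rfl

theorem one_le_index (H : SimpleGraph ℕ) (t : ℕ) : 1 ≤ (algoCol H t).index :=
  (index_algoCol H t).symm ▸ Nat.le_add_left 1 _

/-- The vertices presented before time `t` whose color has index at most `i`. -/
def lowSet (H : SimpleGraph ℕ) (t i : ℕ) : Set ℕ :=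
  {w | w < t ∧ (algoCol H w).index ≤ i}

/-- The component `C_i[u]` at time `t`. -/
def cluster (H : SimpleGraph ℕ) (t i u : ℕ) : Set ℕ :=
  {y | ReachIn H (insert u (lowSet H t i)) u y}

/-- The component of `w` in the graph on the vertices presented before time `t` whose color has
index at most `i`. For `w` in `C_i(v)` and `t = v` this is the component `C_i^w(v)`. -/
def branch (H : SimpleGraph ℕ) (t i w : ℕ) : Set ℕ :=
  {y | ReachIn H (lowSet H t i) w y}

theorem lowSet_mono {t' i' : ℕ} (ht : t ≤ t') (hi : i ≤ i') : lowSet H t i ⊆ lowSet H t' i' :=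
  fun _ hw ↦ ⟨hw.1.trans_le ht, hw.2.trans hi⟩

theorem mem_cluster_self (H : SimpleGraph ℕ) (t i u : ℕ) : u ∈ cluster H t i u :=
  ReachIn.refl (Set.mem_insert u _)

theorem mem_cluster_of_adj (hadj : H.Adj u w) (hw : w ∈ lowSet H t i) : w ∈ cluster H t i u :=
  .of_adj (Set.mem_insert u _) (Set.mem_insert_of_mem u hw) hadj

theorem mem_lowSet_of_mem_cluster (hy : y ∈ cluster H t i u) (hne : y ≠ u) : y ∈ lowSet H t i :=
  hy.mem_right.resolve_left hne

theorem branch_subset_lowSet (H : SimpleGraph ℕ) (t i w : ℕ) : branch H t i w ⊆ lowSet H t i :=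
  fun _ hy ↦ hy.mem_right

theorem cluster_mono {t' i' : ℕ} (ht : t ≤ t') (hi : i ≤ i') :
    cluster H t i u ⊆ cluster H t' i' u := fun _ hy ↦
  hy.mono (Set.insert_subset_insert (lowSet_mono ht hi))

theorem branch_subset_cluster (hadj : H.Adj v w) (hw : w ∈ branch H t i u) :
    branch H t i u ⊆ cluster H t i v := fun _ hy ↦
  (mem_cluster_of_adj hadj hw.mem_right).trans ((hw.symm.trans hy).mono (Set.subset_insert v _))

theorem domSet_algoColAux (H : SimpleGraph ℕ) (t i u : ℕ) :
    domSet (algoColAux H t) t i u = insert u (lowSet H t i) := by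
  ext w
  have := one_le_index H w
  by_cases hw : w < t <;> simp [domSet, lowSet, algoColAux_eq_ite, hw, this, or_comm]

theorem comp_algoColAux (H : SimpleGraph ℕ) (t i u : ℕ) :
    comp H (algoColAux H t) t i u = cluster H t i u := by
  simp only [comp, cluster, domSet_algoColAux]

theorem mixedA_iff (σ : H.Coloring Bool) (hi : 1 ≤ i) :
    MixedA H (algoColAux H t) t i ↔ ∃ x ∈ cluster H t i t, ∃ y ∈ cluster H t i t,
      (x < t ∧ algoCol H x = .a i) ∧ (y < t ∧ algoCol H y = .a i) ∧ σ x ≠ σ y := by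
  have haux (w : ℕ) : algoColAux H t w = .a i ↔ w < t ∧ algoCol H w = .a i := by
    rw [algoColAux_eq_ite]
    split_ifs with hw <;> simp [hw]
    omega
  simp only [MixedA, comp_algoColAux, domSet_algoColAux, haux]
  refine exists_congr fun x ↦ and_congr_right fun hx ↦ exists_congr fun y ↦
    and_congr_right fun hy ↦ and_congr_right fun _ ↦ and_congr_right fun _ ↦ not_congr ?_
  exact (evenReachIn_iff σ).trans (and_iff_right (hx.symm.trans hy))

theorem bddAbove_mixedA (σ : H.Coloring Bool) (t : ℕ) :
    BddAbove {i | 1 ≤ i ∧ MixedA H (algoColAux H t) t i} := by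
  refine ((Set.finite_lt_nat t).image fun x ↦ (algoCol H x).index).bddAbove.mono ?_
  rintro i ⟨hi, hmixed⟩
  obtain ⟨x, -, y, -, ⟨hxt, hx⟩, -⟩ := (mixedA_iff σ hi).1 hmixed
  exact ⟨x, hxt, by simp only [hx, PalColor.index]⟩

theorem lt_index_of_mixedA (σ : H.Coloring Bool) (hi : 1 ≤ i)
    (hmixed : MixedA H (algoColAux H t) t i) : i < (algoCol H t).index := by
  rw [index_algoCol, mIdx, Nat.lt_succ_iff]
  exact le_csSup (bddAbove_mixedA σ t) ⟨hi, hmixed⟩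

theorem mixedA_of_index_eq (σ : H.Coloring Bool) (hi : 1 ≤ i) (ht : (algoCol H t).index = i + 1) :
    MixedA H (algoColAux H t) t i := by
  rw [index_algoCol, mIdx, Nat.succ_inj] at ht
  have hne : {i | 1 ≤ i ∧ MixedA H (algoColAux H t) t i}.Nonempty := by
    by_contra! hempty
    rw [hempty, csSup_empty] at ht
    exact absurd ht (Nat.ne_of_lt hi)
  exact (ht ▸ Nat.sSup_mem hne (bddAbove_mixedA σ t)).2

/-- The vertex `w`, colored `a_i`, lies in a component of `C_i(v)` that `v` is joined to. -/
def IsChild (H : SimpleGraph ℕ) (i v w : ℕ) : Prop :=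
  algoCol H w = .a i ∧ ∃ q, H.Adj v q ∧ q ∈ branch H v i w

theorem IsChild.branch_subset_cluster (h : IsChild H i v w) : branch H v i w ⊆ cluster H v i v :=
  let ⟨_, _, hadj, hq⟩ := h
  _root_.branch_subset_cluster hadj hq

theorem exists_isChild (σ : H.Coloring Bool) (hi : 1 ≤ i) (hv : (algoCol H v).index = i + 1)
    (b : Bool) : ∃ w, IsChild H i v w ∧ σ w = b := by
  have hchild {x : ℕ} (hx : x ∈ cluster H v i v) (hxv : x < v) (hcol : algoCol H x = .a i) :
      IsChild H i v x :=
    let ⟨q, hadj, hq⟩ := hx.exists_adj_of_insert hxv.ne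
    ⟨hcol, q, hadj, hq.symm⟩
  obtain ⟨x, hx, y, hy, ⟨hxv, hcolx⟩, ⟨hyv, hcoly⟩, hne⟩ :=
    (mixedA_iff σ hi).1 (mixedA_of_index_eq σ hi hv)
  rcases eq_or_ne (σ x) b with hb | hb
  · exact ⟨x, hchild hx hxv hcolx, hb⟩
  · exact ⟨y, hchild hy hyv hcoly, bool_eq_of_ne_of_ne hne.symm hb.symm⟩

/-! ### The coloring rules of Algorithm 1 -/

/-- The side `I_2` of `C_m[t]`, not containing `t`. -/
def oppositeSide (σ : H.Coloring Bool) (t m : ℕ) : Set ℕ :=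
  {p ∈ cluster H t m t | σ p ≠ σ t}

/-- The least color index that Algorithm 1 takes into account when it looks for a universal vertex
in `C_m[t]`. -/
noncomputable def univBound (m : ℕ) : ℝ := m - √(2 * m) + 2

/-- The condition under which Algorithm 1 uses the color `c_m`: some vertex `p` in `I_2` is
universal to `C_{j-1}[u]` for a vertex `u` of large color index `j = i + 1`. -/
def SeesUniversal (σ : H.Coloring Bool) (t m : ℕ) : Prop :=
  ∃ u ∈ cluster H t m t, ∃ p ∈ oppositeSide σ t m, ∃ i : ℕ, u < t ∧ 1 ≤ i ∧
    hasColorIndex (algoCol H) u (i + 1) ∧ univBound m ≤ (i + 1 : ℕ) ∧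
      IsUniversalTo σ p (cluster H t i u)

theorem two_le_of_univBound_le {j : ℕ} (h : univBound m ≤ j) : 2 ≤ j := by
  have hsqrt : √(2 * m) < m + 1 := by
    rw [Real.sqrt_lt' (by positivity)]
    nlinarith
  have hj : (1 : ℝ) < j := by
    rw [univBound] at h
    linarith
  exact_mod_cast hj

theorem hasColorIndex.index_eq {col : ℕ → PalColor} {j : ℕ} (h : hasColorIndex col u j) :
    (col u).index = j := by
  rcases h with h | h <;> rw [h, PalColor.index]

theorem lt_of_mem_oppositeSide {σ : H.Coloring Bool} {p : ℕ} (hp : p ∈ oppositeSide σ t m) :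
    p < t :=
  (mem_lowSet_of_mem_cluster hp.1 fun h ↦ hp.2 (h ▸ rfl)).1

theorem evenReachIn_domSet_iff (σ : H.Coloring Bool) (hx : x ∈ cluster H t i u) :
    EvenReachIn H (domSet (algoColAux H t) t i u) u x ↔ σ u = σ x := by
  rw [domSet_algoColAux, evenReachIn_iff σ]
  exact and_iff_right hx

theorem univTo_iff (σ : H.Coloring Bool) {p : ℕ} (hi : 1 ≤ i) (hut : u < t)
    (hu : (algoCol H u).index = i + 1) :
    UnivTo H (algoColAux H t) t (i + 1) u p ↔ IsUniversalTo σ p (cluster H t i u) := by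
  obtain ⟨_, ⟨-, q, hadj, hq⟩, -⟩ := exists_isChild σ hi hu true
  have hqC : q ∈ cluster H t i u := mem_cluster_of_adj hadj (lowSet_mono hut.le le_rfl hq.mem_right)
  simp only [UnivTo, Nat.add_sub_cancel, comp_algoColAux]
  constructor
  · rintro (h | h) x hx hxp
    · have hup : σ p ≠ σ u := σ.valid
        (h u (mem_cluster_self H t i u) ((evenReachIn_domSet_iff σ (mem_cluster_self ..)).2 rfl))
      exact h x hx ((evenReachIn_domSet_iff σ hx).2 (bool_eq_of_ne_of_ne hup.symm hxp))
    · have hqp : σ p ≠ σ q := σ.valid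
        (h q hqC ((evenReachIn_domSet_iff σ hqC).not.2 (σ.valid hadj)))
      refine h x hx ((evenReachIn_domSet_iff σ hx).not.2 fun hux ↦ σ.valid hadj ?_)
      exact hux.trans (bool_eq_of_ne_of_ne hxp hqp.symm)
  · intro h
    by_cases hup : σ u = σ p
    · exact .inr fun x hx hux ↦ h x hx fun hxp ↦
        hux ((evenReachIn_domSet_iff σ hx).2 (hup.trans hxp.symm))
    · exact .inl fun x hx hux ↦ h x hx fun hxp ↦
        hup (((evenReachIn_domSet_iff σ hx).1 hux).trans hxp)

theorem seesUniversal_iff (σ : H.Coloring Bool) :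
    (∃ u ∈ cluster H t m t, ∃ p ∈ oppositeSide σ t m, ∃ j : ℕ,
      hasColorIndex (algoColAux H t) u j ∧ univBound m ≤ j ∧ UnivTo H (algoColAux H t) t j u p) ↔
      SeesUniversal σ t m := by
  refine exists_congr fun u ↦ and_congr_right fun _ ↦ exists_congr fun p ↦
    and_congr_right fun _ ↦ ?_
  constructor
  · rintro ⟨j, hcol, hbound, huniv⟩
    have hj := two_le_of_univBound_le hbound
    obtain ⟨i, rfl⟩ : ∃ i, j = i + 1 := ⟨j - 1, by omega⟩
    have hut : u < t := by
      by_contra hut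
      simp [hasColorIndex, algoColAux_eq_ite, hut] at hcol
    simp only [hasColorIndex, algoColAux_eq_ite, hut, if_true] at hcol
    exact ⟨i, hut, by omega, hcol, hbound,
      (univTo_iff σ (by omega) hut (hasColorIndex.index_eq hcol)).1 huniv⟩
  · rintro ⟨i, hut, hi, hcol, hbound, huniv⟩
    refine ⟨i + 1, ?_, hbound, (univTo_iff σ hi hut hcol.index_eq).2 huniv⟩
    simpa only [hasColorIndex, algoColAux_eq_ite, hut, if_true] using hcol

open Classical in
theorem algoCol_eq_ite (σ : H.Coloring Bool) (hm : (algoCol H t).index = m) :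
    algoCol H t =
      if ∃ u ∈ oppositeSide σ t m, algoCol H u = .a m then .b m
      else if ∃ u ∈ oppositeSide σ t m, algoCol H u = .c m then .a m
      else if SeesUniversal σ t m then .c m else .a m := by
  have hopp : {x ∈ cluster H t m t | ¬ EvenReachIn H (domSet (algoColAux H t) t m t) t x} =
      oppositeSide σ t m :=
    Set.ext fun x ↦ and_congr_right fun hx ↦
      (evenReachIn_domSet_iff σ hx).not.trans (not_congr eq_comm)
  have hboth : {x ∈ cluster H t m t | EvenReachIn H (domSet (algoColAux H t) t m t) t x} ∪
      oppositeSide σ t m = cluster H t m t := by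
    rw [← hopp, ← Set.sep_or, Set.sep_eq_self_iff_mem_true]
    exact fun x _ ↦ Classical.em _
  have hcol {c : PalColor} : (∃ u ∈ oppositeSide σ t m, algoColAux H t u = c) ↔
      ∃ u ∈ oppositeSide σ t m, algoCol H u = c :=
    exists_congr fun u ↦ and_congr_right fun hu ↦ by
      rw [algoColAux_eq_ite, if_pos (lt_of_mem_oppositeSide hu)]
  rw [algoCol_eq_step]
  simp only [step, ← index_algoCol, hm, comp_algoColAux, hopp, hboth, hcol,
    ← seesUniversal_iff, univBound]

theorem notMem_oppositeSide_of_a (σ : H.Coloring Bool) (ht : algoCol H t = .a m)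
    (hu : algoCol H u = .a m) : u ∉ oppositeSide σ t m := by
  intro hmem
  have h := algoCol_eq_ite σ (show (algoCol H t).index = m by rw [ht, PalColor.index])
  rw [if_pos ⟨u, hmem, hu⟩, ht] at h
  simp at h

theorem exists_c_or_not_seesUniversal_of_a (σ : H.Coloring Bool) (ht : algoCol H t = .a m) :
    (∃ z ∈ oppositeSide σ t m, algoCol H z = .c m) ∨ ¬ SeesUniversal σ t m := by
  have h := algoCol_eq_ite σ (show (algoCol H t).index = m by rw [ht, PalColor.index])
  by_contra! hcon
  rw [if_neg fun ⟨u, hu, hcol⟩ ↦ notMem_oppositeSide_of_a σ ht hcol hu,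
    if_neg fun ⟨z, hz, hcol⟩ ↦ hcon.1 z hz hcol, if_pos hcon.2, ht] at h
  simp at h

theorem exists_a_of_b (σ : H.Coloring Bool) (ht : algoCol H t = .b m) :
    ∃ u < t, algoCol H u = .a m := by
  have h := algoCol_eq_ite σ (show (algoCol H t).index = m by rw [ht, PalColor.index])
  rw [ht] at h
  split_ifs at h with hex
  obtain ⟨u, hu, hcol⟩ := hex
  exact ⟨u, lt_of_mem_oppositeSide hu, hcol⟩

theorem seesUniversal_of_c (σ : H.Coloring Bool) (ht : algoCol H t = .c m) :
    SeesUniversal σ t m := by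
  have h := algoCol_eq_ite σ (show (algoCol H t).index = m by rw [ht, PalColor.index])
  rw [ht] at h
  split_ifs at h with _ _ huniv
  exact huniv

/-! ### Vertices with color `a_i` in a common component -/

theorem side_eq_of_a (σ : H.Coloring Bool) (hi : 1 ≤ i) (h : ReachIn H (lowSet H t i) x y)
    (hx : algoCol H x = .a i) (hy : algoCol H y = .a i) : σ x = σ y := by
  induction t with
  | zero => exact absurd h.mem_left.1 (Nat.not_lt_zero x)
  | succ t ih =>
    rcases lt_or_ge i (algoCol H t).index with hit | hit
    · refine ih (h.mono fun w hw ↦ ⟨(Nat.lt_succ_iff_lt_or_eq.1 hw.1).resolve_right ?_, hw.2⟩)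
      rintro rfl
      exact hit.not_ge hw.2
    have hsub : lowSet H (t + 1) i ⊆ insert t (lowSet H t i) := fun w hw ↦
      (Nat.lt_succ_iff_lt_or_eq.1 hw.1).symm.imp_right fun hwt ↦ ⟨hwt, hw.2⟩
    by_cases hxt : ReachIn H (insert t (lowSet H t i)) x t
    · have hxC : x ∈ cluster H t i t := hxt.symm
      have hyC : y ∈ cluster H t i t := hxt.symm.trans (h.mono hsub)
      by_contra hne
      rcases eq_or_ne x t with rfl | hxt'
      · exact notMem_oppositeSide_of_a σ hx hy ⟨hyC, fun hyx ↦ hne hyx.symm⟩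
      rcases eq_or_ne y t with rfl | hyt
      · exact notMem_oppositeSide_of_a σ hy hx ⟨hxC, hne⟩
      · refine hit.not_gt (lt_index_of_mixedA σ hi ((mixedA_iff σ hi).2 ⟨x, hxC, y, hyC, ?_⟩))
        exact ⟨⟨(mem_lowSet_of_mem_cluster hxC hxt').1, hx⟩,
          ⟨(mem_lowSet_of_mem_cluster hyC hyt).1, hy⟩, hne⟩
    · exact ih ((h.mono hsub).of_insert hxt)

theorem not_adj_of_mem_branch (σ : H.Coloring Bool) (hi : 1 ≤ i) (hx : algoCol H x = .a i)
    (hy : algoCol H y = .a i) (hne : σ x ≠ σ y) (hv : v ∈ branch H t i x)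
    (hw : w ∈ branch H t i y) : ¬ H.Adj v w := fun hadj ↦
  hne (side_eq_of_a σ hi ((ReachIn.step hv hadj hw.mem_right).trans hw.symm) hx hy)

theorem cluster_subset_branch {t' i' : ℕ} (ht : t' ≤ t) (hi : i' ≤ i) (hw : w ∈ lowSet H t i) :
    cluster H t' i' w ⊆ branch H t i w := fun _ hy ↦
  hy.mono (Set.insert_subset hw (lowSet_mono ht hi))

end Algorithm

/-! ### Graphs without an induced path on nine vertices -/

section NoInducedP5

variable {V : Type*} {H : SimpleGraph V} {z : V} {D D' : Set V}

theorem PFree.not_forall_lt_adj_iff (hP : PFree H 9) (f : Fin 9 → V) :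
    ¬ ∀ a b : Fin 9, a < b → (H.Adj (f a) (f b) ↔ a.val + 1 = b.val) := by
  intro hf
  have hadj (a b : Fin 9) : H.Adj (f a) (f b) ↔ a.val + 1 = b.val ∨ b.val + 1 = a.val := by
    rcases lt_trichotomy a b with hab | rfl | hab
    · rw [hf a b hab]
      omega
    · simp
    · rw [H.adj_comm, hf b a hab]
      omega
  refine hP ⟨f, fun a b hab ↦ ?_, hadj⟩
  have htwin : ∀ a b : Fin 9, (∀ d : Fin 9, (a.val + 1 = d.val ∨ d.val + 1 = a.val) ↔
      (b.val + 1 = d.val ∨ d.val + 1 = b.val)) → a = b := by decide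
  exact htwin a b fun d ↦ by rw [← hadj a d, ← hadj b d, hab]

/-- No induced path on five vertices of the bipartite graph `H` starts in `z` and has its other
four vertices in `D`. -/
def NoInducedP5From (H : SimpleGraph V) (z : V) (D : Set V) : Prop :=
  ∀ p₁ ∈ D, ∀ p₂ ∈ D, ∀ p₃ ∈ D, ∀ p₄ ∈ D, H.Adj z p₁ → H.Adj p₁ p₂ → H.Adj p₂ p₃ → H.Adj p₃ p₄ →
    ¬ H.Adj z p₃ → H.Adj p₁ p₄

theorem PFree.noInducedP5From_or (σ : H.Coloring Bool) (hP : PFree H 9)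
    (hsep : ∀ x ∈ D, ∀ y ∈ D', ¬ H.Adj x y) :
    NoInducedP5From H z D ∨ NoInducedP5From H z D' := by
  by_contra! hcon
  simp only [NoInducedP5From, not_forall] at hcon
  obtain ⟨⟨q₁, hq₁, q₂, hq₂, q₃, hq₃, q₄, hq₄, e₁, e₂, e₃, e₄, hzq, hqq⟩,
    ⟨p₁, hp₁, p₂, hp₂, p₃, hp₃, p₄, hp₄, d₁, d₂, d₃, d₄, hzp, hpp⟩⟩ := hcon
  have hside {x y : V} (h : H.Adj x y) : σ y = !σ x := Bool.eq_not_of_ne (σ.valid h.symm)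
  have hsame {x y : V} (h : σ x = σ y) : ¬ H.Adj x y := fun hadj ↦ σ.valid hadj h
  refine hP.not_forall_lt_adj_iff ![q₄, q₃, q₂, q₁, z, p₁, p₂, p₃, p₄] fun a b hab ↦ ?_
  rw [H.adj_comm] at hzq hqq
  have hσq : σ q₁ = !σ z ∧ σ q₂ = !σ q₁ ∧ σ q₃ = !σ q₂ ∧ σ q₄ = !σ q₃ :=
    ⟨hside e₁, hside e₂, hside e₃, hside e₄⟩
  have hσp : σ p₁ = !σ z ∧ σ p₂ = !σ p₁ ∧ σ p₃ = !σ p₂ ∧ σ p₄ = !σ p₃ :=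
    ⟨hside d₁, hside d₂, hside d₃, hside d₄⟩
  fin_cases a <;> fin_cases b <;> first
    | (exfalso; revert hab; decide)
    | simp [*, e₁.symm, e₂.symm, e₃.symm, e₄.symm]

end NoInducedP5

section

variable {H : SimpleGraph ℕ} {z s y : ℕ} {D E : Set ℕ}

theorem NoInducedP5From.adj_of_reachIn (σ : H.Coloring Bool) (hN : NoInducedP5From H z D)
    {p u w : ℕ} (hp : p ∈ D) (hzp : H.Adj z p) (hpu : H.Adj p u)
    (hw : ReachIn H (D \ H.neighborSet z) u w) (hwz : σ w = σ z) : H.Adj p w := by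
  have huz : σ u = σ z := bool_eq_of_ne_of_ne (σ.valid hpu).symm (σ.valid hzp)
  refine (hw.induction_on (P := fun w ↦ (σ w = σ z → H.Adj p w) ∧
    (σ w ≠ σ z → ∃ v ∈ D, H.Adj p v ∧ H.Adj v w)) ⟨fun _ ↦ hpu, fun h ↦ absurd huz h⟩
    fun a b ha ih hab hb ↦ ⟨fun hbz ↦ ?_, fun hbz ↦ ?_⟩).1 hwz
  · obtain ⟨v, hv, hpv, hva⟩ := ih.2 fun haz ↦ σ.valid hab (haz.trans hbz.symm)
    have haD := ha.mem_right
    exact hN p hp v hv a haD.1 b hb.1 hzp hpv hva hab haD.2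
  · exact ⟨a, ha.mem_right.1, ih.1 (bool_eq_of_ne_of_ne (σ.valid hab) hbz.symm), hab⟩

theorem NoInducedP5From.exists_adj (σ : H.Coloring Bool) (hN : NoInducedP5From H z D)
    (hED : ∀ v, ReachIn H E s v → v ∈ D) (hzs : ¬ H.Adj z s) (hy : ReachIn H E s y)
    (hzy : H.Adj z y) : ∃ p, ReachIn H E s p ∧ H.Adj z p ∧
      ∀ w, ReachIn H (D \ H.neighborSet z) s w → σ w = σ z → H.Adj p w := by
  have hs : s ∈ D \ H.neighborSet z := ⟨hED s (ReachIn.refl hy.mem_left), hzs⟩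
  obtain ⟨u, p, -, hp, hup, huT, hpT⟩ :=
    hy.exists_boundary (T := {v | ReachIn H (D \ H.neighborSet z) s v}) (ReachIn.refl hs)
      fun h ↦ h.mem_right.2 hzy
  have hzp : H.Adj z p := by
    by_contra hzp
    exact hpT (ReachIn.step huT hup ⟨hED p hp, hzp⟩)
  exact ⟨p, hp, hzp, fun w hw ↦
    hN.adj_of_reachIn σ (hED p hp) hzp hup.symm (huT.symm.trans hw)⟩

theorem NoInducedP5From.exists_adj_of_adj_of_adj (σ : H.Coloring Bool)
    (hN : NoInducedP5From H z D) {w q₁ q₂ : ℕ} (hw : w ∈ D) (hwz : σ w ≠ σ z) (hzw : ¬ H.Adj z w)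
    (hq₁ : H.Adj w q₁) (hq₂ : H.Adj w q₂) (hq₂D : q₂ ∈ D) (hED : ∀ v, ReachIn H E q₁ v → v ∈ D)
    (hy : ReachIn H E q₁ y) (hzy : H.Adj z y) : ∃ p, ReachIn H E q₁ p ∧ H.Adj p q₂ := by
  have hside {q : ℕ} (hwq : H.Adj w q) : σ q = σ z :=
    bool_eq_of_ne_of_ne (σ.valid hwq).symm hwz.symm
  have hdiff {q : ℕ} (hwq : H.Adj w q) (hq : q ∈ D) : q ∈ D \ H.neighborSet z :=
    ⟨hq, fun h ↦ σ.valid h (hside hwq).symm⟩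
  have hq₁D := hdiff hq₁ (hED q₁ (ReachIn.refl hy.mem_left))
  obtain ⟨p, hp, -, hpu⟩ := hN.exists_adj σ hED hq₁D.2 hy hzy
  have hq₁q₂ : ReachIn H (D \ H.neighborSet z) q₁ q₂ :=
    (ReachIn.of_adj hq₁D ⟨hw, hzw⟩ hq₁.symm).step hq₂ (hdiff hq₂ hq₂D)
  exact ⟨p, hp, hpu q₂ hq₁q₂ (hside hq₂)⟩

end

/-! ### Children of a vertex -/

section Children

variable {H : SimpleGraph ℕ} {σ : H.Coloring Bool} {g i k l lev m p t u w x z : ℕ}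
  {Q : Set ℕ}

theorem le_of_mem_cluster (hz : z ∈ cluster H x m x) : z ≤ x :=
  hz.mem_right.elim Eq.le fun h ↦ h.1.le

theorem index_le_of_mem_cluster (hx : (algoCol H x).index ≤ m) (hz : z ∈ cluster H x m x) :
    (algoCol H z).index ≤ m :=
  hz.mem_right.elim (fun h ↦ h ▸ hx) And.right

theorem cluster_subset_cluster (hz : z ∈ cluster H x m x) (ht : t ≤ z) (hi : i ≤ m) :
    cluster H t i z ⊆ cluster H x m x := fun _ hy ↦
  ReachIn.trans hz <| hy.mono <| Set.insert_subset hz.mem_right <|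
    (lowSet_mono (ht.trans (le_of_mem_cluster hz)) hi).trans (Set.subset_insert x _)

theorem IsChild.mem_lowSet (h : IsChild H i z g) : g ∈ lowSet H z i :=
  let ⟨_, _, _, hq⟩ := h
  hq.mem_left

theorem IsChild.mem_cluster (h : IsChild H i z g) : g ∈ cluster H z i z :=
  h.branch_subset_cluster (ReachIn.refl h.mem_lowSet)

theorem HasForcing.of_forall_isChild (hi : 1 ≤ i) (hu : (algoCol H u).index = i + 1)
    (hchild : ∀ w, IsChild H i u w → HasForcing σ k (σ w) (Q ∩ branch H u i w))
    (hp : IsUniversalTo σ p (Q ∩ cluster H u i u)) :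
    HasForcing σ (k + 1) (σ p) (insert p (Q ∩ cluster H u i u)) := by
  choose w hw hσw using fun e ↦ exists_isChild σ hi hu (e ^^ σ p)
  have hsub (e) : Q ∩ branch H u i (w e) ⊆ Q ∩ cluster H u i u :=
    Set.inter_subset_inter_right Q (hw e).branch_subset_cluster
  refine (HasForcing.join (p := p) (fun e ↦ hσw e ▸ hchild (w e) (hw e)) ?_
    fun e ↦ hp.mono (hsub e)).mono (Set.insert_subset_insert (Set.iUnion_subset hsub))
  intro e e' hne x hx y hy
  refine not_adj_of_mem_branch σ hi (hw e).1 (hw e').1 (fun h ↦ hne ?_) hx.2 hy.2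
  simpa [hσw] using h

theorem NoInducedP5From.exists_isUniversalTo (hN : NoInducedP5From H z (branch H z i g))
    (hg : IsChild H i z g) (hw : w ∈ branch H z i g) (hl : l ≤ i)
    (huntouched : ∀ y ∈ cluster H z l w, ¬ H.Adj z y) :
    ∃ p ∈ branch H z i g, H.Adj z p ∧ IsUniversalTo σ p (cluster H z l w) := by
  obtain ⟨-, q, hzq, hq⟩ := hg
  have hcluster : cluster H z l w ⊆ branch H z i w := cluster_subset_branch le_rfl hl hw.mem_right
  obtain ⟨p, hp, hzp, hpu⟩ := hN.exists_adj σ (fun v hv ↦ ReachIn.trans hw hv)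
    (huntouched w (mem_cluster_self H z l w)) (ReachIn.trans (ReachIn.symm hw) hq) hzq
  refine ⟨p, ReachIn.trans hw hp, hzp, fun v hv hvp ↦ hpu v ?_ ?_⟩
  · have hdiff {v : ℕ} (hv : v ∈ cluster H z l w) :
        v ∈ branch H z i g \ H.neighborSet z :=
      ⟨ReachIn.trans hw (hcluster hv), huntouched v hv⟩
    exact ReachIn.induction_on hv (ReachIn.refl (hdiff (mem_cluster_self H z l w)))
      fun a b ha hwa hab hb ↦ hwa.step hab (hdiff (ha.step hab hb))
  · exact bool_eq_of_ne_of_ne hvp (σ.valid hzp)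

/-- A child `g` of `z` such that no induced path on five vertices leads from `z` into the component
of `g`, and such that `z` has a neighbor in `C_l[w]` for every vertex `w` of this component whose
color is `a_{l+1}` with `l + 1 ≥ lev`. -/
structure IsGoodChild (H : SimpleGraph ℕ) (lev i z g : ℕ) : Prop where
  isChild : IsChild H i z g
  noInducedP5From : NoInducedP5From H z (branch H z i g)
  exists_adj : ∀ w ∈ branch H z i g, ∀ l, algoCol H w = .a (l + 1) → lev ≤ l + 1 →
    ∃ y ∈ cluster H z l w, H.Adj z y

theorem IsGoodChild.adj (hg : IsGoodChild H lev i z g) (hw : w ∈ branch H z i g)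
    (hwz : σ w ≠ σ z) (hcol : algoCol H w = .a (l + 1)) (hl : 1 ≤ l) (hlev : lev ≤ l) :
    H.Adj z w := by
  by_contra hzw
  have hindex : (algoCol H w).index = l + 1 := by rw [hcol, PalColor.index]
  have hwlow : w ∈ lowSet H z i := hw.mem_right
  have hlow : lowSet H z l ⊆ lowSet H z i :=
    lowSet_mono le_rfl (Nat.le_of_succ_le (hindex.symm.trans_le hwlow.2))
  have hbranch (v) : branch H w l v ⊆ branch H z l v :=
    fun _ hv ↦ ReachIn.mono (lowSet_mono hwlow.1.le le_rfl) hv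
  obtain ⟨w₁, hw₁, hσ₁⟩ := exists_isChild σ hl hindex false
  obtain ⟨w₂, hw₂, hσ₂⟩ := exists_isChild σ hl hindex true
  obtain ⟨hcol₁, q₁, hq₁, hq₁w₁⟩ := hw₁
  obtain ⟨hcol₂, q₂, hq₂, hq₂w₂⟩ := hw₂
  replace hq₁w₁ := hbranch w₁ hq₁w₁
  replace hq₂w₂ := hbranch w₂ hq₂w₂
  have hmem {q v : ℕ} (hwq : H.Adj w q) (hv : ReachIn H (lowSet H z l) q v) :
      v ∈ branch H z i g :=
    (ReachIn.step hw hwq (hlow hv.mem_left)).trans (hv.mono hlow)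
  obtain ⟨y, hy, hzy⟩ := hg.exists_adj w₁ (hmem hq₁ (ReachIn.symm hq₁w₁)) (l - 1)
    (by rwa [Nat.sub_add_cancel hl]) (by rwa [Nat.sub_add_cancel hl])
  have hy' : y ∈ branch H z l w₁ :=
    cluster_subset_branch le_rfl (Nat.sub_le l 1) hq₁w₁.mem_left hy
  obtain ⟨p, hp, hpq₂⟩ := hg.noInducedP5From.exists_adj_of_adj_of_adj σ hw hwz hzw hq₁ hq₂
    (hmem hq₂ (ReachIn.refl hq₂w₂.mem_right)) (fun _ ↦ hmem hq₁)
    (ReachIn.trans (ReachIn.symm hq₁w₁) hy') hzy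
  exact not_adj_of_mem_branch σ hl hcol₁ hcol₂ (by simp [hσ₁, hσ₂])
    (ReachIn.trans hq₁w₁ hp) hq₂w₂ hpq₂

theorem exists_isChild_noInducedP5From (σ : H.Coloring Bool) (hP : PFree H 9) (hi : 1 ≤ i)
    (hz : (algoCol H z).index = i + 1) :
    ∃ g, IsChild H i z g ∧ NoInducedP5From H z (branch H z i g) := by
  obtain ⟨g, hg, hσg⟩ := exists_isChild σ hi hz false
  obtain ⟨g', hg', hσg'⟩ := exists_isChild σ hi hz true
  have hsep : ∀ x ∈ branch H z i g, ∀ y ∈ branch H z i g', ¬ H.Adj x y := fun x hx y hy ↦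
    not_adj_of_mem_branch σ hi hg.1 hg'.1 (by simp [hσg, hσg']) hx hy
  exact (hP.noInducedP5From_or σ hsep).elim (fun h ↦ ⟨g, hg, h⟩) fun h ↦ ⟨g', hg', h⟩

end Children

/-! ### Forcing graphs in the absence of universal vertices -/

section NoUniversal

variable {H : SimpleGraph ℕ} {σ : H.Coloring Bool} {d g i j k m p t u x y z : ℕ} {s : Bool}

theorem univBound_le (hm : 2 * (d + 1) ^ 2 + 1 ≤ m) (hj : 2 ≤ j) (hjm : j ≤ m)
    (hi : m ≤ i + 2 * d) : univBound j ≤ i := by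
  rify at hm hj hjm hi
  have hsqrt_m : 2 * (d + 1 : ℝ) ≤ √(2 * m) := Real.le_sqrt_of_sq_le (by nlinarith)
  have hsqrt_j : (2 : ℝ) ≤ √(2 * j) := Real.le_sqrt_of_sq_le (by linarith)
  have hsqrt : √(2 * j) ≤ √(2 * m) := Real.sqrt_le_sqrt (by linarith)
  have hsq_j : √(2 * j) * √(2 * j) = 2 * j := Real.mul_self_sqrt (by linarith)
  have hsq_m : √(2 * m) * √(2 * m) = 2 * m := Real.mul_self_sqrt (by linarith)
  rw [univBound]
  nlinarith

theorem le_of_univBound_le (hj : 2 * d ^ 2 + 2 * d + 7 ≤ j) (hi : univBound j ≤ i) :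
    2 * d ^ 2 + 2 ≤ i := by
  by_contra! hcon
  have hcon' : i + 1 ≤ 2 * d ^ 2 + 2 := hcon
  rify at hj hcon'
  have hsqrt : √(2 * j) < j - 2 * d ^ 2 + 1 := by
    rw [Real.sqrt_lt' (by linarith)]
    nlinarith
  rw [univBound] at hi
  linarith

/-- No vertex of `C_m[x]` on the side of `x` is universal to `C_{j-1}[u]` for a vertex `u` of
`C_m[x]` of color index `j ≥ 2 * d ^ 2 + 2`, and `m` is large compared to `d`. -/
structure NoUniversal (σ : H.Coloring Bool) (d m x : ℕ) : Prop where
  index_le : (algoCol H x).index ≤ m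
  one_le : 1 ≤ d
  le_index : 2 * (d + 1) ^ 2 + 1 ≤ m
  not_isUniversalTo : ∀ p ∈ cluster H x m x, σ p = σ x → ∀ u ∈ cluster H x m x, ∀ i,
    (algoCol H u).index = i + 1 → 2 * d ^ 2 + 1 ≤ i → ¬ IsUniversalTo σ p (cluster H u i u)

/-- If `w` has color `a_{l+1}` and lies in the branch of a good child of a vertex `z` on the side
`s`, then `z` has a neighbor in `C_l[w]` as soon as `l + 1` is at least the touch level of `s`. On
the side of `x` the bound comes from the condition for the color `c_m`, on the other side from
`NoUniversal`. -/
def touchLevel (σ : H.Coloring Bool) (d m x : ℕ) (s : Bool) : ℕ :=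
  if s = σ x then m - 2 * d else 2 * d ^ 2 + 2

/-- The vertices colored `a_i` for an `i` above the touch level of the opposite side. If such a
vertex lies in the branch of a good child of a vertex `z` on the other side, then it is adjacent
to `z`. -/
def linkable (σ : H.Coloring Bool) (d m x : ℕ) : Set ℕ :=
  {y | ∃ i, algoCol H y = .a i ∧ touchLevel σ d m x (!σ y) < i}

theorem mem_linkable_of_side_eq (hyx : σ y = σ x) (hcol : algoCol H y = .a i)
    (hi : 2 * d ^ 2 + 2 < i) : y ∈ linkable σ d m x :=
  ⟨i, hcol, by simpa [touchLevel, hyx] using hi⟩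

namespace NoUniversal

variable (h : NoUniversal σ d m x)
include h

theorem le_sub : 2 * d ^ 2 + 2 * d + 3 ≤ m - 2 * d := by
  have := h.le_index
  have : 2 * (d + 1) ^ 2 = 2 * d ^ 2 + 4 * d + 2 := by ring
  omega

theorem two_le_touchLevel (s : Bool) : 2 ≤ touchLevel σ d m x s := by
  have := h.le_sub
  unfold touchLevel
  split_ifs <;> omega

theorem touchLevel_le (s : Bool) : touchLevel σ d m x s ≤ m - 2 * d := by
  have := h.le_sub
  unfold touchLevel
  split_ifs <;> omega

theorem not_isUniversalTo_of_le (hp : p ∈ cluster H x m x) (hpx : σ p = σ x)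
    (hu : u ∈ cluster H x m x) (hindex : (algoCol H u).index = i + 1) (hi : 2 * d ^ 2 + 1 ≤ i)
    (hut : u ≤ t) : ¬ IsUniversalTo σ p (cluster H t i u) := fun huniv ↦
  h.not_isUniversalTo p hp hpx u hu i hindex hi (huniv.mono (cluster_mono hut le_rfl))

theorem not_seesUniversal_of_a (hz : z ∈ cluster H x m x) (hzx : σ z = σ x)
    (hcol : algoCol H z = .a j) (hj : m - 2 * d + 4 ≤ j) (hjm : j ≤ m) :
    ¬ SeesUniversal σ z j := by
  refine (exists_c_or_not_seesUniversal_of_a σ hcol).resolve_left ?_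
  rintro ⟨y, hy, hcoly⟩
  have hyx : y ∈ cluster H x m x := cluster_subset_cluster hz le_rfl hjm hy.1
  have hsub : cluster H y j y ⊆ cluster H x m x := cluster_subset_cluster hyx le_rfl hjm
  obtain ⟨u, hu, p, hp, i, huy, -, hindex, hbound, huniv⟩ := seesUniversal_of_c σ hcoly
  have hle : 2 * d ^ 2 + 2 ≤ i + 1 :=
    le_of_univBound_le (hj.trans' (Nat.add_le_add_right h.le_sub 4)) hbound
  exact h.not_isUniversalTo_of_le (hsub hp.1) ((bool_eq_of_ne_of_ne hp.2 hy.2.symm).trans hzx)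
    (hsub hu) hindex.index_eq (Nat.le_of_succ_le_succ hle) huy.le huniv

theorem exists_isGoodChild (hP : PFree H 9) (hz : z ∈ cluster H x m x)
    (hcol : algoCol H z = .a (i + 1)) (hi : 1 ≤ i) (hzx : σ z = σ x → m - 2 * d + 4 ≤ i + 1) :
    ∃ g, IsGoodChild H (touchLevel σ d m x (σ z)) i z g := by
  have hindex : (algoCol H z).index = i + 1 := by rw [hcol, PalColor.index]
  have him : i + 1 ≤ m := hindex ▸ index_le_of_mem_cluster h.index_le hz
  obtain ⟨g, hg, hN⟩ := exists_isChild_noInducedP5From σ hP hi hindex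
  refine ⟨g, hg, hN, fun w hw l hcolw hlev ↦ ?_⟩
  by_contra! huntouched
  have hindexw : (algoCol H w).index = l + 1 := by rw [hcolw, PalColor.index]
  obtain ⟨hwz, hwi⟩ := branch_subset_lowSet H z i g hw
  rw [hindexw] at hwi
  obtain ⟨p, hp, hzp, huniv⟩ :=
    hN.exists_isUniversalTo hg hw (Nat.le_of_succ_le hwi) huntouched
  have hsub : branch H z i g ⊆ cluster H z i z := hg.branch_subset_cluster
  have hsubx : cluster H z i z ⊆ cluster H x m x :=
    cluster_subset_cluster hz le_rfl (Nat.le_of_succ_le him)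
  by_cases hs : σ z = σ x
  · have hl : m - 2 * d ≤ l + 1 := by simpa [touchLevel, hs] using hlev
    have hsub' : cluster H z i z ⊆ cluster H z (i + 1) z := cluster_mono le_rfl (Nat.le_succ i)
    exact h.not_seesUniversal_of_a hz hs hcol (hzx hs) him
      ⟨w, hsub' (hsub hw), p, ⟨hsub' (hsub hp), (σ.valid hzp).symm⟩, l, hwz,
        by have := h.le_sub; omega, .inl hcolw,
        univBound_le h.le_index (Nat.succ_le_succ hi) him (by omega), huniv⟩
  · have hl : 2 * d ^ 2 + 2 ≤ l + 1 := by simpa [touchLevel, hs] using hlev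
    exact h.not_isUniversalTo_of_le (hsubx (hsub hp))
      (bool_eq_of_ne_of_ne (σ.valid hzp).symm (Ne.symm hs)) (hsubx (hsub hw)) hindexw
      (Nat.le_of_succ_le_succ hl) hwz.le huniv

theorem isUniversalTo_linkable (hg : IsGoodChild H (touchLevel σ d m x (σ z)) i z g) :
    IsUniversalTo σ z (linkable σ d m x ∩ branch H z i g) := by
  rintro w ⟨⟨j, hcol, hlev⟩, hw⟩ hwz
  rw [Bool.eq_not_of_ne hwz, Bool.not_not] at hlev
  have := h.two_le_touchLevel (σ z)
  obtain ⟨l, rfl⟩ : ∃ l, j = l + 1 := ⟨j - 1, by omega⟩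
  exact hg.adj hw hwz hcol (by omega) (Nat.le_of_lt_succ hlev)

theorem mem_linkable (hcol : algoCol H y = .a i) (hi : m - 2 * d < i) : y ∈ linkable σ d m x :=
  ⟨i, hcol, (h.touchLevel_le _).trans_lt hi⟩

theorem hasForcing_zero_of_side_ne (hP : PFree H 9) (hz : z ∈ cluster H x m x)
    (hcol : algoCol H z = .a (i + 1)) (hi : m - 2 * d ≤ i) (hzx : σ z ≠ σ x) :
    HasForcing σ 0 s (linkable σ d m x ∩ cluster H z i z) := by
  have hd := h.one_le
  have hle := h.le_sub
  obtain ⟨g, hg⟩ := h.exists_isGoodChild hP hz hcol (by omega) fun hs ↦ absurd hs hzx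
  have hgcol : algoCol H g = .a i := hg.isChild.1
  have hgi : g ∈ lowSet H z i := hg.isChild.mem_lowSet
  obtain ⟨y, hy, hyx, j, hycol, hj⟩ : ∃ y ∈ branch H z i g, σ y = σ x ∧
      ∃ j, algoCol H y = .a j ∧ 2 * d ^ 2 + 2 < j := by
    by_cases hgx : σ g = σ x
    · exact ⟨g, ReachIn.refl hgi, hgx, i, hgcol, by omega⟩
    · obtain ⟨i, rfl⟩ : ∃ i', i = i' + 1 := ⟨i - 1, by omega⟩
      obtain ⟨y, hy, hyx⟩ := exists_isChild σ (v := g) (i := i) (by omega)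
        (by rw [hgcol, PalColor.index]) (σ x)
      exact ⟨y, cluster_subset_branch hgi.1.le (Nat.le_succ i) hgi hy.mem_cluster, hyx, i, hy.1,
        by omega⟩
  have hylink : y ∈ linkable σ d m x := mem_linkable_of_side_eq hyx hycol hj
  refine hasForcing_zero (h.isUniversalTo_linkable hg y ⟨hylink, hy⟩ (hyx ▸ hzx.symm)) ?_ ?_
  · exact ⟨h.mem_linkable hcol (Nat.lt_succ_of_le hi), mem_cluster_self H z i z⟩
  · exact ⟨hylink, hg.isChild.branch_subset_cluster hy⟩

theorem hasForcing_zero (hP : PFree H 9) (hz : z ∈ cluster H x m x)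
    (hcol : algoCol H z = .a (i + 1)) (hi : m - 2 * d + 1 ≤ i) :
    HasForcing σ 0 s (linkable σ d m x ∩ cluster H z i z) := by
  by_cases hzx : σ z = σ x
  · have hindex : (algoCol H z).index = i + 1 := by rw [hcol, PalColor.index]
    have him : i + 1 ≤ m := hindex ▸ index_le_of_mem_cluster h.index_le hz
    obtain ⟨w, hw, hwx⟩ := exists_isChild σ (by omega) hindex (!σ x)
    obtain ⟨i, rfl⟩ : ∃ i', i = i' + 1 := ⟨i - 1, by omega⟩
    have hwx' : w ∈ cluster H x m x :=
      cluster_subset_cluster hz le_rfl (Nat.le_of_succ_le him) hw.mem_cluster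
    refine (h.hasForcing_zero_of_side_ne hP hwx' hw.1 (by omega) (by simp [hwx])).mono ?_
    exact Set.inter_subset_inter_right _
      (cluster_subset_cluster hw.mem_cluster le_rfl (Nat.le_succ i))
  · exact h.hasForcing_zero_of_side_ne hP hz hcol (Nat.le_of_succ_le hi) hzx

theorem hasForcing (hP : PFree H 9) (hz : z ∈ cluster H x m x)
    (hcol : algoCol H z = .a (i + 1)) (hi : m - 2 * d + 1 + 2 * k ≤ i) :
    HasForcing σ k (σ z) (linkable σ d m x ∩ cluster H z i z) := by
  induction k generalizing z i with
  | zero => exact h.hasForcing_zero hP hz hcol hi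
  | succ k ih =>
    have hindex : (algoCol H z).index = i + 1 := by rw [hcol, PalColor.index]
    have him : i + 1 ≤ m := hindex ▸ index_le_of_mem_cluster h.index_le hz
    obtain ⟨g, hg⟩ := h.exists_isGoodChild hP hz hcol (by omega) fun _ ↦ by omega
    obtain ⟨i, rfl⟩ : ∃ i', i = i' + 2 := ⟨i - 2, by omega⟩
    have hgcol : algoCol H g = .a (i + 2) := hg.isChild.1
    have hgz : g ∈ lowSet H z (i + 2) := hg.isChild.mem_lowSet
    have hsubx : cluster H z (i + 2) z ⊆ cluster H x m x :=
      cluster_subset_cluster hz le_rfl (Nat.le_of_succ_le him)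
    have hsub : cluster H g (i + 1) g ⊆ branch H z (i + 2) g :=
      cluster_subset_branch hgz.1.le (Nat.le_succ _) hgz
    have hsubz := hsub.trans hg.isChild.branch_subset_cluster
    have hchild (w : ℕ) (hw : IsChild H (i + 1) g w) :
        HasForcing σ k (σ w) (linkable σ d m x ∩ branch H g (i + 1) w) := by
      refine (ih (hsubx (hsubz hw.mem_cluster)) hw.1 (by omega)).mono ?_
      exact Set.inter_subset_inter_right _
        (cluster_subset_branch hw.mem_lowSet.1.le (Nat.le_succ i) hw.mem_lowSet)
    refine (HasForcing.of_forall_isChild (Nat.le_add_left 1 i) (by rw [hgcol, PalColor.index])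
      hchild ((h.isUniversalTo_linkable hg).mono (Set.inter_subset_inter_right _ hsub))).mono ?_
    refine Set.insert_subset ⟨h.mem_linkable hcol (by omega), mem_cluster_self H z _ z⟩ ?_
    exact Set.inter_subset_inter_right _ hsubz

end NoUniversal

theorem HasForcing.of_isUniversalTo (hcluster : ∀ x m, algoCol H x = .a m → j ≤ m →
      HasForcing σ k (σ x) (cluster H x m x)) (hj : 1 ≤ j) (hji : j ≤ i)
    (hu : (algoCol H u).index = i + 1) (hp : IsUniversalTo σ p (cluster H u i u)) :
    HasForcing σ (k + 1) (σ p) (insert p (cluster H u i u)) := by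
  have h := HasForcing.of_forall_isChild (k := k) (Q := Set.univ) (hj.trans hji) hu (fun w hw ↦ ?_)
    (by rwa [Set.univ_inter])
  · rwa [Set.univ_inter] at h
  · rw [Set.univ_inter]
    exact (hcluster w i hw.1 hji).mono
      (cluster_subset_branch hw.mem_lowSet.1.le le_rfl hw.mem_lowSet)

theorem hasForcing_cluster_of_a (σ : H.Coloring Bool) (hP : PFree H 9) (hcol : algoCol H x = .a m)
    (hm : 2 * (k + 2) ^ 2 + 1 ≤ m) : HasForcing σ k (σ x) (cluster H x m x) := by
  have hindex : (algoCol H x).index = m := by rw [hcol, PalColor.index]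
  induction k generalizing x m with
  | zero =>
    obtain ⟨i, rfl⟩ : ∃ i, m = i + 1 := ⟨m - 1, by omega⟩
    obtain ⟨_, ⟨-, q, hxq, hq⟩, -⟩ := exists_isChild σ (by omega) hindex true
    exact hasForcing_zero hxq (mem_cluster_self H x _ x)
      (mem_cluster_of_adj hxq (lowSet_mono le_rfl (Nat.le_succ i) hq.mem_right))
  | succ k ih =>
    by_cases huniv : ∃ p ∈ cluster H x m x, σ p = σ x ∧ ∃ u ∈ cluster H x m x, ∃ i,
        (algoCol H u).index = i + 1 ∧ 2 * (k + 2) ^ 2 + 1 ≤ i ∧ IsUniversalTo σ p (cluster H u i u)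
    · obtain ⟨p, hp, hpx, u, hu, i, hindexu, hi, hpu⟩ := huniv
      have him : i + 1 ≤ m := hindexu ▸ index_le_of_mem_cluster hindex.le hu
      have hforcing := HasForcing.of_isUniversalTo
        (fun y l hy hl ↦ ih hy hl (by rw [hy, PalColor.index])) (Nat.le_add_left 1 _) hi hindexu hpu
      exact hpx ▸ hforcing.mono (Set.insert_subset hp
        (cluster_subset_cluster hu le_rfl (Nat.le_of_succ_le him)))
    · have hsq : k + 1 + 2 ≤ (k + 1 + 2) ^ 2 := Nat.le_self_pow two_ne_zero _
      have h : NoUniversal σ (k + 2) m x := ⟨hindex.le, by omega, hm, by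
        push Not at huniv
        exact huniv⟩
      obtain ⟨i, rfl⟩ : ∃ i, m = i + 1 := ⟨m - 1, by omega⟩
      refine (h.hasForcing hP (mem_cluster_self H x _ x) hcol (by omega)).mono ?_
      exact Set.inter_subset_right.trans (cluster_mono le_rfl (Nat.le_succ i))

end NoUniversal

/-! ### The graph on the natural numbers presented to Algorithm 1 -/

theorem pFree_iff_isEmpty_embedding {V : Type*} {G : SimpleGraph V} {n : ℕ} :
    PFree G n ↔ IsEmpty (SimpleGraph.pathGraph n ↪g G) := by
  simp only [PFree, ← not_nonempty_iff, not_iff_not]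
  constructor
  · rintro ⟨f, hinj, hadj⟩
    exact ⟨⟨⟨f, hinj⟩, (hadj _ _).trans SimpleGraph.pathGraph_adj.symm⟩⟩
  · rintro ⟨f⟩
    exact ⟨f, f.injective, fun _ _ ↦ f.map_adj_iff.trans SimpleGraph.pathGraph_adj⟩

section ToNatGraph

variable {V W : Type*} {F : SimpleGraph W} {G : SimpleGraph V} {n m i j : ℕ} {π : Fin n ≃ V}

theorem toNatGraph_adj_iff :
    (toNatGraph G π).Adj i j ↔ ∃ (hi : i < n) (hj : j < n), G.Adj (π ⟨i, hi⟩) (π ⟨j, hj⟩) := by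
  rw [toNatGraph, SimpleGraph.fromRel_adj]
  constructor
  · rintro ⟨-, h | ⟨hj, hi, h⟩⟩
    · exact h
    · exact ⟨hi, hj, h.symm⟩
  · rintro ⟨hi, hj, h⟩
    refine ⟨?_, .inl ⟨hi, hj, h⟩⟩
    rintro rfl
    exact h.ne rfl

theorem nonempty_embedding_of_toNatGraph (hF : ∀ v, ∃ w, F.Adj v w) (f : F ↪g toNatGraph G π) :
    Nonempty (F ↪g G) := by
  have hlt (v : W) : f v < n :=
    let ⟨_, hvw⟩ := hF v
    (toNatGraph_adj_iff.1 (f.map_adj_iff.2 hvw)).1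
  have hinj : Function.Injective fun v ↦ π ⟨f v, hlt v⟩ := fun v w h ↦
    f.injective (Fin.mk.inj (π.injective h))
  refine ⟨⟨⟨_, hinj⟩, fun {v w} ↦ ?_⟩⟩
  rw [← f.map_adj_iff, toNatGraph_adj_iff]
  exact ⟨fun h ↦ ⟨hlt v, hlt w, h⟩, fun ⟨_, _, h⟩ ↦ h⟩

theorem PFree.toNatGraph (hn : 2 ≤ m) (hG : PFree G m) : PFree (toNatGraph G π) m := by
  have : Nontrivial (Fin m) := Fin.nontrivial_iff_two_le.2 hn
  rw [pFree_iff_isEmpty_embedding, ← not_nonempty_iff] at hG ⊢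
  exact fun ⟨f⟩ ↦ hG <| nonempty_embedding_of_toNatGraph
    (fun v ↦ (SimpleGraph.pathGraph_preconnected m).exists_adj_of_nontrivial v) f

theorem nonempty_coloring_toNatGraph {α : Type*} [Inhabited α] (σ : G.Coloring α) :
    Nonempty ((toNatGraph G π).Coloring α) := by
  refine ⟨.mk (fun i ↦ if h : i < n then σ (π ⟨i, h⟩) else default) fun {i j} hij ↦ ?_⟩
  obtain ⟨hi, hj, h⟩ := toNatGraph_adj_iff.1 hij
  simpa only [hi, hj, dif_pos] using σ.valid h

end ToNatGraph

/-! ### Counting colors -/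

theorem le_of_algoCol_toNatGraph_eq_a {V : Type} [Fintype V] [Nonempty V] {G : SimpleGraph V}
    {n m x : ℕ} {π : Fin n ≃ V} (σ : (toNatGraph G π).Coloring Bool) (hG : PFree G 9)
    (hx : algoCol (toNatGraph G π) x = .a m) : m ≤ 2 * (onlineChrom V G + 1) ^ 2 := by
  by_contra! hm
  obtain ⟨k, hk⟩ := Nat.exists_eq_add_of_lt (onlineChrom_pos (G := G))
  rw [Nat.zero_add] at hk
  obtain ⟨f, -⟩ := hasForcing_cluster_of_a (k := k) σ (hG.toNatGraph (by norm_num)) hx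
    (by rwa [hk] at hm)
  obtain ⟨f'⟩ := nonempty_embedding_of_toNatGraph forcingGraph.exists_adj f
  have hle := le_onlineChrom_of_forcingGraph_embedding f'
  omega

theorem card_image_algoCol_le {H : SimpleGraph ℕ} (σ : H.Coloring Bool) (s : Finset ℕ) {K : ℕ}
    (hK : ∀ x m, algoCol H x = .a m → m ≤ K) : (s.image (algoCol H)).card ≤ 3 * K := by
  have hindex (x : ℕ) (hx : 2 ≤ (algoCol H x).index) : (algoCol H x).index ≤ K + 1 := by
    obtain ⟨i, hi⟩ : ∃ i, (algoCol H x).index = i + 1 := ⟨(algoCol H x).index - 1, by omega⟩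
    obtain ⟨w, hw, -⟩ := exists_isChild σ (by omega) hi true
    exact hi.trans_le (Nat.succ_le_succ (hK w i hw.1))
  have hsub : s.image (algoCol H) ⊆ (Finset.Icc 1 K).image PalColor.a ∪
      (Finset.Icc 1 K).image PalColor.b ∪ (Finset.Icc 2 (K + 1)).image PalColor.c := by
    intro col hcol
    obtain ⟨x, -, rfl⟩ := Finset.mem_image.1 hcol
    have hpos := one_le_index H x
    have hle := hindex x
    rcases hx : algoCol H x with m | m | m
    all_goals
      rw [hx, PalColor.index] at hpos hle
    · simpa using ⟨hpos, hK x m hx⟩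
    · obtain ⟨u, -, hu⟩ := exists_a_of_b σ hx
      simpa using ⟨hpos, hK u m hu⟩
    · obtain ⟨u, hu, -, -, i, hux, hi, hcolu, -⟩ := seesUniversal_of_c σ hx
      have hum : (algoCol H u).index ≤ m := (mem_lowSet_of_mem_cluster hu hux.ne).2
      rw [hcolu.index_eq] at hum
      have hm : 2 ≤ m := by omega
      simpa using ⟨hm, hle hm⟩
  calc (s.image (algoCol H)).card
    _ ≤ ((Finset.Icc 1 K).image PalColor.a).card + ((Finset.Icc 1 K).image PalColor.b).card +
        ((Finset.Icc 2 (K + 1)).image PalColor.c).card :=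
      (Finset.card_le_card hsub).trans <| (Finset.card_union_le _ _).trans <|
        Nat.add_le_add_right (Finset.card_union_le _ _) _
    _ ≤ (Finset.Icc 1 K).card + (Finset.Icc 1 K).card + (Finset.Icc 2 (K + 1)).card := by
      gcongr <;> exact Finset.card_image_le
    _ = 3 * K := by
      simp only [Nat.card_Icc]
      omega

theorem stmt12 {V : Type} [Fintype V] (G : SimpleGraph V)
    (hP9 : PFree G 9)
    (hbip : ∃ side : V → Bool, ∀ x y, G.Adj x y → side x ≠ side y)
    (n : ℕ) (π : Fin n ≃ V) :
    ((Finset.range n).image (algoCol (toNatGraph G π))).card ≤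
      6 * (onlineChrom V G + 1) ^ 2 := by
  rcases Nat.eq_zero_or_pos n with rfl | hn
  · simp
  have : Nonempty V := ⟨π ⟨0, hn⟩⟩
  obtain ⟨side, hside⟩ := hbip
  obtain ⟨σ⟩ : Nonempty ((toNatGraph G π).Coloring Bool) :=
    nonempty_coloring_toNatGraph (.mk side fun h ↦ hside _ _ h)
  have hindex (x m : ℕ) (hx : algoCol (toNatGraph G π) x = .a m) :
      m ≤ 2 * (onlineChrom V G + 1) ^ 2 := le_of_algoCol_toNatGraph_eq_a σ hP9 hx
  calc ((Finset.range n).image (algoCol (toNatGraph G π))).card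
    _ ≤ 3 * (2 * (onlineChrom V G + 1) ^ 2) := card_image_algoCol_le σ _ hindex
    _ = 6 * (onlineChrom V G + 1) ^ 2 := by ring
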